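/- arXiv:2602.13822 — 5 statements merged into one kernel-verified Lean document; each statement's English description precedes it below -/
import Mathlib

section
/- (Polynomial growth of the local mass) Let n ≥ 1, s ∈ (0,1), q > 1, let K be an admissible kernel, and let u be a nonnegative weak supersolution of L_K u = u^q in ℝⁿ. Then there exists a constant C > 0, independent of R (but depending on u), such that S(R) = ∫_{B_R} u(x)^q dx ≤ C Rⁿ for all R ≥ 1. -/
open MeasureTheory Metric

noncomputable section

abbrev Euc (n : ℕ) := EuclideanSpace ℝ (Fin n)

def IsAdmissibleKernel (n : ℕ) (s lam Lam : ℝ) (K : Euc n → ℝ) : Prop :=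
  0 < lam ∧ lam ≤ Lam ∧ Measurable K ∧
  (∀ z : Euc n, z ≠ 0 → K z = K (-z)) ∧
  (∀ z : Euc n, z ≠ 0 →
    lam * ‖z‖ ^ (-(n : ℝ) - 2 * s) ≤ K z ∧ K z ≤ Lam * ‖z‖ ^ (-(n : ℝ) - 2 * s))

def LK (n : ℕ) (K φ : Euc n → ℝ) (x : Euc n) : ℝ :=
  (1 / 2) * ∫ z : Euc n, (2 * φ x - φ (x + z) - φ (x - z)) * K z

def IsTestFun (n : ℕ) (φ : Euc n → ℝ) : Prop :=
  ContDiff ℝ (⊤ : ℕ∞) φ ∧ HasCompactSupport φ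

def MemL1Tail (n : ℕ) (s : ℝ) (u : Euc n → ℝ) : Prop :=
  LocallyIntegrable u volume ∧
  Integrable (fun x : Euc n => |u x| * (1 + ‖x‖) ^ (-(n : ℝ) - 2 * s)) volume

def MemLqLoc (n : ℕ) (q : ℝ) (u : Euc n → ℝ) : Prop :=
  ∀ R : ℝ, 0 < R → IntegrableOn (fun x : Euc n => u x ^ q) (ball (0 : Euc n) R) volume

def IsWeakSupersol (n : ℕ) (s q : ℝ) (K u : Euc n → ℝ) : Prop :=
  Measurable u ∧ (∀ x, 0 ≤ u x) ∧ MemLqLoc n q u ∧ MemL1Tail n s u ∧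
  ∀ φ : Euc n → ℝ, IsTestFun n φ → (∀ x, 0 ≤ φ x) →
    (∫ x : Euc n, u x ^ q * φ x) ≤ ∫ x : Euc n, u x * LK n K φ x

def IsCutoff (n : ℕ) (η : Euc n → ℝ) : Prop :=
  ContDiff ℝ (⊤ : ℕ∞) η ∧ (∀ x, 0 ≤ η x ∧ η x ≤ 1) ∧
  (∀ x : Euc n, ‖x‖ ≤ 1 → η x = 1) ∧ (∀ x : Euc n, 2 ≤ ‖x‖ → η x = 0)

def cutoffSq (n : ℕ) (η : Euc n → ℝ) (R : ℝ) : Euc n → ℝ :=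
  fun x => (η (R⁻¹ • x)) ^ 2

/-!
Truncating `L_K` at `|z| = 1` shows that it maps a test function `φ` to a function bounded by
`C Λ (1 + |x|)^{-n-2s}`, where `C` depends on `φ` but on the kernel only through its upper bound
`Λ |z|^{-n-2s}`: near `z = 0` the second difference of `φ` is `O(|z|²)`, and far from the support of
`φ` only `|z| ≥ |x|/2` contributes. The class of kernels is stable under dilation, so this uniform
estimate applied to the dilated kernel gives `|L_K (φ(·/R)) x| ≤ C Λ Rⁿ (1 + |x|)^{-n-2s}` for
`R ≥ 1`. Testing the inequality with a cutoff `φ(·/R)` equal to `1` on `B_R` therefore bounds the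
local mass by `C Λ Rⁿ` times the weighted norm of `u` in `L¹_{2s}`.
-/

section SecondDifference

lemma norm_second_difference_le_of_norm_le {E F : Type*} [AddGroup E]
    [SeminormedAddCommGroup F] [NormedSpace ℝ F] {φ : E → F} {B : ℝ} (hB : ∀ x, ‖φ x‖ ≤ B)
    (x z : E) :
    ‖(2 : ℝ) • φ x - φ (x + z) - φ (x - z)‖ ≤ 4 * B :=
  calc ‖(2 : ℝ) • φ x - φ (x + z) - φ (x - z)‖
      ≤ ‖(2 : ℝ) • φ x‖ + ‖φ (x + z)‖ + ‖φ (x - z)‖ :=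
        (norm_sub_le _ _).trans (by gcongr; exact norm_sub_le _ _)
    _ ≤ 2 * B + B + B := by
        rw [norm_smul, Real.norm_two]
        gcongr <;> exact hB _
    _ = 4 * B := by ring

variable {E F : Type*} [NormedAddCommGroup E] [NormedSpace ℝ E] [NormedAddCommGroup F]
  [NormedSpace ℝ F] {φ : E → F}

lemma norm_second_difference_le_of_lipschitzWith_fderiv {L : NNReal} (hφ : Differentiable ℝ φ)
    (hL : LipschitzWith L (fderiv ℝ φ)) (x z : E) :
    ‖(2 : ℝ) • φ x - φ (x + z) - φ (x - z)‖ ≤ L * ‖z‖ ^ 2 := by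
  -- The second difference is the increment of the first difference `h` between `x` and `x - z`.
  let h : E → F := fun w => φ (w + z) - φ w
  have hshift : Differentiable ℝ fun w => φ (w + z) := hφ.comp (differentiable_id.add_const z)
  have hfderiv : ∀ w, ‖fderiv ℝ h w‖ ≤ L * ‖z‖ := fun w => by
    have heq : fderiv ℝ h w = fderiv ℝ φ (w + z) - fderiv ℝ φ w := by
      rw [fderiv_fun_sub (hshift w) (hφ w), fderiv_comp_add_right]
    simpa [heq] using hL.norm_sub_le (w + z) w
  have hmean : ‖h (x - z) - h x‖ ≤ L * ‖z‖ * ‖x - z - x‖ :=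
    convex_univ.norm_image_sub_le_of_norm_fderiv_le
      (fun w _ => (hshift.sub hφ) w) (fun w _ => hfderiv w) (Set.mem_univ x) (Set.mem_univ _)
  calc ‖(2 : ℝ) • φ x - φ (x + z) - φ (x - z)‖
      = ‖h (x - z) - h x‖ := by simp only [h, sub_add_cancel, two_smul]; congr 1; abel
    _ ≤ L * ‖z‖ * ‖x - z - x‖ := hmean
    _ = L * ‖z‖ ^ 2 := by rw [sub_sub_cancel_left, norm_neg]; ring

lemma exists_norm_second_difference_le (hφ : ContDiff ℝ 2 φ) (hc : HasCompactSupport φ) :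
    ∃ C, 0 ≤ C ∧ ∀ x z,
      ‖(2 : ℝ) • φ x - φ (x + z) - φ (x - z)‖ ≤ C * min 1 (‖z‖ ^ 2) := by
  obtain ⟨L, hL⟩ := (hφ.fderiv_right (m := 1) le_rfl).lipschitzWith_of_hasCompactSupport
    (hc.fderiv ℝ) one_ne_zero
  obtain ⟨B, hB⟩ := hc.exists_bound_of_continuous hφ.continuous
  have hB0 : 0 ≤ B := (norm_nonneg _).trans (hB 0)
  refine ⟨4 * B + L, by positivity, fun x z => ?_⟩
  rw [mul_min_of_nonneg _ _ (by positivity), mul_one]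
  refine le_min ?_ ?_
  · exact (norm_second_difference_le_of_norm_le hB x z).trans (le_add_of_nonneg_right L.2)
  · refine (norm_second_difference_le_of_lipschitzWith_fderiv
      (hφ.differentiable two_ne_zero) hL x z).trans ?_
    gcongr
    exact le_add_of_nonneg_left (by positivity)

end SecondDifference

lemma integrableOn_Ioi_min_one_sq_mul_rpow {p : ℝ} (hp : -3 < p) (hp' : p < -1) :
    IntegrableOn (fun r : ℝ => min 1 (r ^ 2) * r ^ p) (Set.Ioi 0) := by
  have hnear : IntegrableOn (fun r : ℝ => min 1 (r ^ 2) * r ^ p) (Set.Ioc 0 1) := by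
    have hpow : IntegrableOn (fun r : ℝ => r ^ (2 + p)) (Set.Ioc 0 1) :=
      (intervalIntegrable_iff_integrableOn_Ioc_of_le zero_le_one).1
        (intervalIntegral.intervalIntegrable_rpow' (by linarith))
    refine hpow.congr_fun (fun r hr => ?_) measurableSet_Ioc
    dsimp only
    rw [min_eq_right (pow_le_one₀ hr.1.le hr.2), Real.rpow_add hr.1, Real.rpow_two]
  have hfar : IntegrableOn (fun r : ℝ => min 1 (r ^ 2) * r ^ p) (Set.Ioi 1) := by
    refine (integrableOn_Ioi_rpow_of_lt hp' one_pos).congr_fun (fun r hr => ?_) measurableSet_Ioi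
    dsimp only
    rw [min_eq_left (one_le_pow₀ (le_of_lt hr)), one_mul]
  rw [← Set.Ioc_union_Ioi_eq_Ioi zero_le_one]
  exact hnear.union hfar

lemma integrable_min_one_norm_sq_mul_norm_rpow {E : Type*} [NormedAddCommGroup E]
    [NormedSpace ℝ E] [FiniteDimensional ℝ E] [MeasurableSpace E] [BorelSpace E]
    (μ : Measure E) [μ.IsAddHaarMeasure] {α : ℝ} (hα : α ∈ Set.Ioo 0 2) :
    Integrable (fun z : E => min 1 (‖z‖ ^ 2) * ‖z‖ ^ (-(Module.finrank ℝ E : ℝ) - α)) μ := by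
  rcases subsingleton_or_nontrivial E with hE | hE
  · have : IsFiniteMeasure μ := CompactSpace.isFiniteMeasure
    exact .of_subsingleton
  · rw [integrable_fun_norm_addHaar μ
      (f := fun r : ℝ => min 1 (r ^ 2) * r ^ (-(Module.finrank ℝ E : ℝ) - α))]
    refine (integrableOn_Ioi_min_one_sq_mul_rpow (p := -1 - α) (by linarith [hα.2])
      (by linarith [hα.1])).congr_fun (fun r (hr : 0 < r) => ?_) measurableSet_Ioi
    dsimp only
    rw [smul_eq_mul, mul_left_comm, ← Real.rpow_natCast r (_ - 1), ← Real.rpow_add hr,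
      Nat.cast_pred Module.finrank_pos]
    congr 2
    ring

lemma setIntegral_le_integral_mul_of_eqOn_one {X : Type*} [MeasurableSpace X] {μ : Measure X}
    {A : Set X} {f φ : X → ℝ} (hA : MeasurableSet A) (hint : Integrable (fun x => f x * φ x) μ)
    (hf : ∀ x, 0 ≤ f x) (hφ : ∀ x, 0 ≤ φ x) (hφA : Set.EqOn φ 1 A) :
    ∫ x in A, f x ∂μ ≤ ∫ x, f x * φ x ∂μ :=
  calc ∫ x in A, f x ∂μ = ∫ x in A, f x * φ x ∂μ :=
        setIntegral_congr_fun hA fun x hx => by simp [hφA hx]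
    _ ≤ ∫ x, f x * φ x ∂μ :=
        setIntegral_le_integral hint (.of_forall fun x => mul_nonneg (hf x) (hφ x))

lemma rpow_le_rpow_neg_mul_rpow {b c t p : ℝ} (ht : 0 < t) (hc : 0 < c) (hp : p ≤ 0)
    (h : t ≤ c * b) : b ^ p ≤ c ^ (-p) * t ^ p := by
  have hb : 0 < b := pos_of_mul_pos_right (ht.trans_le h) hc.le
  calc b ^ p = c ^ (-p) * (c * b) ^ p := by
        rw [Real.mul_rpow hc.le hb.le, Real.rpow_neg hc.le, inv_mul_cancel_left₀ (by positivity)]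
    _ ≤ c ^ (-p) * t ^ p := by
        gcongr ?_ * ?_
        exact Real.rpow_le_rpow_of_nonpos ht h hp

/-- A measurable kernel on `ℝⁿ`, of any sign and symmetry, dominated by `Λ |z|^{-n-2s}`: a class
containing the admissible kernels and stable under the dilations `K ↦ K(R ·)`. The condition `0 ≤ Λ`
is imposed separately because the bound is vacuous when `n = 0`. -/
def IsKernelBoundedBy (n : ℕ) (s Λ : ℝ) (K : Euc n → ℝ) : Prop :=
  0 ≤ Λ ∧ Measurable K ∧ ∀ z : Euc n, z ≠ 0 → |K z| ≤ Λ * ‖z‖ ^ (-(n : ℝ) - 2 * s)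

section Kernel

variable {n : ℕ} {s Λ lam : ℝ} {K φ : Euc n → ℝ}

lemma IsAdmissibleKernel.isKernelBoundedBy (hK : IsAdmissibleKernel n s lam Λ K) :
    IsKernelBoundedBy n s Λ K := by
  obtain ⟨hlam, hle, hmeas, -, hbound⟩ := hK
  refine ⟨hlam.le.trans hle, hmeas, fun z hz => ?_⟩
  have hnonneg : 0 ≤ K z := le_trans (by positivity) (hbound z hz).1
  rw [abs_of_nonneg hnonneg]
  exact (hbound z hz).2

lemma IsKernelBoundedBy.comp_smul (hK : IsKernelBoundedBy n s Λ K) {R : ℝ} (hR : 0 < R) :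
    IsKernelBoundedBy n s (Λ * R ^ (-(n : ℝ) - 2 * s)) fun z => K (R • z) := by
  obtain ⟨hΛ, hmeas, hbound⟩ := hK
  refine ⟨by positivity, hmeas.comp (measurable_const_smul R), fun z hz => ?_⟩
  calc |K (R • z)| ≤ Λ * ‖R • z‖ ^ (-(n : ℝ) - 2 * s) := hbound _ (smul_ne_zero hR.ne' hz)
    _ = Λ * R ^ (-(n : ℝ) - 2 * s) * ‖z‖ ^ (-(n : ℝ) - 2 * s) := by
      rw [norm_smul, Real.norm_of_nonneg hR.le, Real.mul_rpow hR.le (norm_nonneg z), mul_assoc]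

lemma IsKernelBoundedBy.abs_le_of_le_norm (hK : IsKernelBoundedBy n s Λ K)
    (hp : -(n : ℝ) - 2 * s ≤ 0) {r : ℝ} (hr : 0 < r) {z : Euc n} (hz : r ≤ ‖z‖) :
    |K z| ≤ Λ * r ^ (-(n : ℝ) - 2 * s) :=
  (hK.2.2 z (norm_pos_iff.1 (hr.trans_le hz))).trans
    (mul_le_mul_of_nonneg_left (Real.rpow_le_rpow_of_nonpos hr hz hp) hK.1)

lemma LK_comp_inv_smul (K φ : Euc n → ℝ) {R : ℝ} (hR : 0 < R) (x : Euc n) :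
    LK n K (fun y => φ (R⁻¹ • y)) x = R ^ n * LK n (fun z => K (R • z)) φ (R⁻¹ • x) := by
  have hscale := Measure.integral_comp_smul_of_nonneg volume (fun z : Euc n =>
    (2 * φ (R⁻¹ • x) - φ (R⁻¹ • (x + z)) - φ (R⁻¹ • (x - z))) * K z) R (hR := hR.le)
  simp only [smul_add, smul_sub, inv_smul_smul₀ hR.ne', finrank_euclideanSpace_fin,
    smul_eq_mul] at hscale
  simp only [LK, smul_add, smul_sub]
  rw [hscale]
  field_simp

lemma abs_LK_le_of_abs_le {g : Euc n → ℝ} (hg : Integrable g) {x : Euc n}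
    (hle : ∀ z, |(2 * φ x - φ (x + z) - φ (x - z)) * K z| ≤ g z) :
    |LK n K φ x| ≤ 1 / 2 * ∫ z, g z := by
  rw [LK, abs_mul, abs_of_pos one_half_pos, ← Real.norm_eq_abs]
  gcongr
  exact norm_integral_le_of_norm_le hg (.of_forall hle)

lemma exists_abs_LK_le (hs : s ∈ Set.Ioo 0 1) (hφ : ContDiff ℝ 2 φ) (hc : HasCompactSupport φ) :
    ∃ C, 0 ≤ C ∧ ∀ Λ K, IsKernelBoundedBy n s Λ K → ∀ x, |LK n K φ x| ≤ C * Λ := by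
  obtain ⟨M, hM, hdiff⟩ := exists_norm_second_difference_le hφ hc
  let w : Euc n → ℝ := fun z => min 1 (‖z‖ ^ 2) * ‖z‖ ^ (-(n : ℝ) - 2 * s)
  have hw : Integrable w := by
    simpa only [finrank_euclideanSpace_fin] using integrable_min_one_norm_sq_mul_norm_rpow
      (E := Euc n) volume (α := 2 * s) ⟨by linarith [hs.1], by linarith [hs.2]⟩
  have : 0 ≤ ∫ z, w z := integral_nonneg fun z => by positivity
  refine ⟨1 / 2 * (M * ∫ z, w z), by positivity, fun Λ K hK x => ?_⟩
  have hpoint : ∀ z, |(2 * φ x - φ (x + z) - φ (x - z)) * K z| ≤ M * Λ * w z := fun z => by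
    rcases eq_or_ne z 0 with rfl | hz
    · simp [two_mul, w]
    · calc |(2 * φ x - φ (x + z) - φ (x - z)) * K z|
          = ‖(2 : ℝ) • φ x - φ (x + z) - φ (x - z)‖ * |K z| := abs_mul _ _
        _ ≤ M * min 1 (‖z‖ ^ 2) * (Λ * ‖z‖ ^ (-(n : ℝ) - 2 * s)) := by
          gcongr
          exacts [hdiff x z, hK.2.2 z hz]
        _ = M * Λ * w z := by ring
  calc |LK n K φ x| ≤ 1 / 2 * ∫ z, M * Λ * w z := abs_LK_le_of_abs_le (hw.const_mul _) hpoint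
    _ = 1 / 2 * (M * ∫ z, w z) * Λ := by rw [integral_const_mul]; ring

lemma abs_LK_le_of_support_subset_closedBall (hK : IsKernelBoundedBy n s Λ K)
    (hp : -(n : ℝ) - 2 * s ≤ 0) (hφ : Integrable φ) {x : Euc n} (hx : x ≠ 0)
    (hsupp : Function.support φ ⊆ closedBall 0 (‖x‖ / 2)) :
    |LK n K φ x| ≤ (∫ y, |φ y|) * Λ * (‖x‖ / 2) ^ (-(n : ℝ) - 2 * s) := by
  have hx0 : 0 < ‖x‖ := norm_pos_iff.2 hx
  have hφx : φ x = 0 := Function.notMem_support.1 fun h => by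
    linarith [mem_closedBall_zero_iff.1 (hsupp h)]
  set b : ℝ := Λ * (‖x‖ / 2) ^ (-(n : ℝ) - 2 * s) with hb
  have hterm : ∀ y z, ‖x - y‖ = ‖z‖ → |φ y| * |K z| ≤ b * |φ y| := fun y z hyz => by
    by_cases hy : y ∈ Function.support φ
    · have hnorm : ‖x‖ / 2 ≤ ‖z‖ := by
        linarith [norm_sub_norm_le x y, mem_closedBall_zero_iff.1 (hsupp hy)]
      rw [mul_comm]
      gcongr
      exact hK.abs_le_of_le_norm hp (by positivity) hnorm
    · simp [Function.notMem_support.1 hy]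
  have hpoint : ∀ z, |(2 * φ x - φ (x + z) - φ (x - z)) * K z|
      ≤ b * |φ (x + z)| + b * |φ (x - z)| := fun z =>
    calc |(2 * φ x - φ (x + z) - φ (x - z)) * K z|
        = |φ (x + z) + φ (x - z)| * |K z| := by
          rw [hφx, abs_mul, mul_zero, zero_sub, ← neg_add', abs_neg]
      _ ≤ (|φ (x + z)| + |φ (x - z)|) * |K z| := by gcongr; exact abs_add_le _ _
      _ = |φ (x + z)| * |K z| + |φ (x - z)| * |K z| := add_mul _ _ _
      _ ≤ b * |φ (x + z)| + b * |φ (x - z)| :=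
        add_le_add (hterm _ _ (by simp)) (hterm _ _ (by simp))
  have hadd : Integrable fun z => b * |φ (x + z)| := (hφ.comp_add_left x).abs.const_mul b
  have hsub : Integrable fun z => b * |φ (x - z)| := (hφ.comp_sub_left x).abs.const_mul b
  calc |LK n K φ x| ≤ 1 / 2 * ∫ z, (b * |φ (x + z)| + b * |φ (x - z)|) :=
        abs_LK_le_of_abs_le (hadd.add hsub) hpoint
    _ = 1 / 2 * (b * (∫ y, |φ y|) + b * ∫ y, |φ y|) := by
        rw [integral_add hadd hsub, integral_const_mul, integral_const_mul,
          integral_add_left_eq_self (fun y => |φ y|), integral_sub_left_eq_self (fun y => |φ y|)]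
    _ = (∫ y, |φ y|) * Λ * (‖x‖ / 2) ^ (-(n : ℝ) - 2 * s) := by rw [hb]; ring

lemma exists_abs_LK_le_mul_rpow (hs : s ∈ Set.Ioo 0 1) (hφ : ContDiff ℝ 2 φ)
    (hc : HasCompactSupport φ) :
    ∃ C, 0 ≤ C ∧ ∀ Λ K, IsKernelBoundedBy n s Λ K →
      ∀ x, |LK n K φ x| ≤ C * Λ * (1 + ‖x‖) ^ (-(n : ℝ) - 2 * s) := by
  set p : ℝ := -(n : ℝ) - 2 * s
  have hp : p ≤ 0 := by linarith [hs.1, n.cast_nonneg (α := ℝ)]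
  obtain ⟨C, hC, hbound⟩ := exists_abs_LK_le hs hφ hc
  obtain ⟨ρ, hρ, hsupp⟩ := hc.isBounded.subset_closedBall_lt 1 0
  set m : ℝ := ∫ y, |φ y|
  have : 0 ≤ m := integral_nonneg fun y => abs_nonneg _
  refine ⟨C * (1 + 2 * ρ) ^ (-p) + m * 4 ^ (-p), by positivity, fun Λ K hK x => ?_⟩
  have hΛ : 0 ≤ Λ := hK.1
  rcases le_or_gt ‖x‖ (2 * ρ) with hx | hx
  · calc |LK n K φ x| ≤ C * Λ * 1 ^ p := by simpa using hbound Λ K hK x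
      _ ≤ C * Λ * ((1 + 2 * ρ) ^ (-p) * (1 + ‖x‖) ^ p) := by
        gcongr
        exact rpow_le_rpow_neg_mul_rpow (by positivity) (by positivity) hp (by linarith)
      _ ≤ C * Λ * ((1 + 2 * ρ) ^ (-p) * (1 + ‖x‖) ^ p)
          + m * Λ * (4 ^ (-p) * (1 + ‖x‖) ^ p) := le_add_of_nonneg_right (by positivity)
      _ = _ := by ring
  · have hx0 : x ≠ 0 := norm_pos_iff.1 (by linarith)
    have hsupp' : Function.support φ ⊆ closedBall 0 (‖x‖ / 2) :=
      (subset_tsupport φ).trans (hsupp.trans (closedBall_subset_closedBall (by linarith)))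
    calc |LK n K φ x| ≤ m * Λ * (‖x‖ / 2) ^ p :=
          abs_LK_le_of_support_subset_closedBall hK hp
            (hφ.continuous.integrable_of_hasCompactSupport hc) hx0 hsupp'
      _ ≤ m * Λ * (4 ^ (-p) * (1 + ‖x‖) ^ p) := by
        gcongr
        exact rpow_le_rpow_neg_mul_rpow (by positivity) (by positivity) hp (by linarith)
      _ ≤ C * Λ * ((1 + 2 * ρ) ^ (-p) * (1 + ‖x‖) ^ p)
          + m * Λ * (4 ^ (-p) * (1 + ‖x‖) ^ p) := le_add_of_nonneg_left (by positivity)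
      _ = _ := by ring

lemma exists_abs_LK_comp_inv_smul_le (hs : s ∈ Set.Ioo 0 1) (hK : IsKernelBoundedBy n s Λ K)
    (hφ : ContDiff ℝ 2 φ) (hc : HasCompactSupport φ) :
    ∃ C, 0 ≤ C ∧ ∀ R, 1 ≤ R → ∀ x,
      |LK n K (fun y => φ (R⁻¹ • y)) x| ≤ C * R ^ n * (1 + ‖x‖) ^ (-(n : ℝ) - 2 * s) := by
  set p : ℝ := -(n : ℝ) - 2 * s
  have hp : p ≤ 0 := by linarith [hs.1, n.cast_nonneg (α := ℝ)]
  obtain ⟨C, hC, hdecay⟩ := exists_abs_LK_le_mul_rpow hs hφ hc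
  have hΛ : 0 ≤ Λ := hK.1
  refine ⟨C * Λ, by positivity, fun R hR x => ?_⟩
  have hR0 : 0 < R := by linarith
  have hnorm : R * (1 + ‖R⁻¹ • x‖) = R + ‖x‖ := by
    rw [norm_smul, Real.norm_of_nonneg (by positivity)]
    field_simp
  calc |LK n K (fun y => φ (R⁻¹ • y)) x|
      = R ^ n * |LK n (fun z => K (R • z)) φ (R⁻¹ • x)| := by
        rw [LK_comp_inv_smul K φ hR0, abs_mul, abs_of_pos (by positivity)]
    _ ≤ R ^ n * (C * (Λ * R ^ p) * (1 + ‖R⁻¹ • x‖) ^ p) := by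
        gcongr
        exact hdecay _ _ (hK.comp_smul hR0) _
    _ = C * Λ * R ^ n * (R + ‖x‖) ^ p := by
        rw [← hnorm, Real.mul_rpow hR0.le (by positivity)]
        ring
    _ ≤ C * Λ * R ^ n * (1 + ‖x‖) ^ p := by
        gcongr ?_ * ?_
        exact Real.rpow_le_rpow_of_nonpos (by positivity) (by linarith) hp

end Kernel

lemma MemLqLoc.locallyIntegrable {n : ℕ} {q : ℝ} {u : Euc n → ℝ} (hu : MemLqLoc n q u) :
    LocallyIntegrable (fun x => u x ^ q) := fun x =>
  ⟨ball 0 (‖x‖ + 1), isOpen_ball.mem_nhds (by simp), hu _ (by positivity)⟩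

lemma integral_mul_le_of_abs_le_mul_rpow {n : ℕ} {s D : ℝ} {u g : Euc n → ℝ}
    (hu : MemL1Tail n s u) (hg : ∀ x, |g x| ≤ D * (1 + ‖x‖) ^ (-(n : ℝ) - 2 * s)) :
    ∫ x, u x * g x ≤ D * ∫ x, |u x| * (1 + ‖x‖) ^ (-(n : ℝ) - 2 * s) := by
  rw [← integral_const_mul]
  refine (Real.le_norm_self _).trans
    (norm_integral_le_of_norm_le (hu.2.const_mul D) (.of_forall fun x => ?_))
  calc ‖u x * g x‖ = |u x| * |g x| := norm_mul _ _
    _ ≤ |u x| * (D * (1 + ‖x‖) ^ (-(n : ℝ) - 2 * s)) := by gcongr; exact hg x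
    _ = D * (|u x| * (1 + ‖x‖) ^ (-(n : ℝ) - 2 * s)) := by ring

lemma exists_isTestFun_eqOn_one (n : ℕ) :
    ∃ φ : Euc n → ℝ, IsTestFun n φ ∧ (∀ x, 0 ≤ φ x) ∧ Set.EqOn φ 1 (ball 0 1) :=
  let f : ContDiffBump (0 : Euc n) := ⟨1, 2, one_pos, one_lt_two⟩
  ⟨f, ⟨f.contDiff, f.hasCompactSupport⟩, fun _ => f.nonneg,
    fun _ hx => f.one_of_mem_closedBall (ball_subset_closedBall hx)⟩

lemma IsTestFun.comp_smul {n : ℕ} {φ : Euc n → ℝ} (hφ : IsTestFun n φ) {c : ℝ} (hc : c ≠ 0) :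
    IsTestFun n fun x => φ (c • x) :=
  ⟨hφ.1.comp (contDiff_const_smul c), hφ.2.comp_smul hc⟩

lemma eqOn_one_comp_inv_smul {E : Type*} [SeminormedAddCommGroup E] [NormedSpace ℝ E]
    {φ : E → ℝ} (hφ : Set.EqOn φ 1 (ball 0 1)) {R : ℝ} (hR : 0 < R) :
    Set.EqOn (fun x => φ (R⁻¹ • x)) 1 (ball 0 R) := fun x hx => hφ <| by
  rw [mem_ball_zero_iff] at hx ⊢
  rwa [norm_smul, norm_inv, Real.norm_of_nonneg hR.le, inv_mul_lt_one₀ hR]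

theorem local_mass_polynomial_growth_general {n : ℕ} {s Λ : ℝ} (hs : s ∈ Set.Ioo 0 1)
    {K u f : Euc n → ℝ} (hK : IsKernelBoundedBy n s Λ K) (hu : MemL1Tail n s u)
    (hf : LocallyIntegrable f) (hf0 : ∀ x, 0 ≤ f x)
    (hsup : ∀ φ, IsTestFun n φ → (∀ x, 0 ≤ φ x) → ∫ x, f x * φ x ≤ ∫ x, u x * LK n K φ x) :
    ∃ C, 0 < C ∧ ∀ R, 1 ≤ R → ∫ x in ball (0 : Euc n) R, f x ≤ C * R ^ (n : ℝ) := by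
  obtain ⟨φ, hφ, hφ0, hφ1⟩ := exists_isTestFun_eqOn_one n
  obtain ⟨D, hD, hLK⟩ := exists_abs_LK_comp_inv_smul_le hs hK (contDiff_infty.1 hφ.1 2) hφ.2
  set A : ℝ := ∫ x, |u x| * (1 + ‖x‖) ^ (-(n : ℝ) - 2 * s)
  have : 0 ≤ A := integral_nonneg fun x => by positivity
  refine ⟨D * A + 1, by positivity, fun R hR => ?_⟩
  have hR0 : 0 < R := by linarith
  have hφR : IsTestFun n fun x => φ (R⁻¹ • x) := hφ.comp_smul (inv_ne_zero hR0.ne')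
  have hφR1 : Set.EqOn (fun x => φ (R⁻¹ • x)) 1 (ball 0 R) := eqOn_one_comp_inv_smul hφ1 hR0
  calc ∫ x in ball 0 R, f x ≤ ∫ x, f x * φ (R⁻¹ • x) :=
        setIntegral_le_integral_mul_of_eqOn_one measurableSet_ball
          (hf.integrable_smul_right_of_hasCompactSupport hφR.1.continuous hφR.2) hf0
          (fun x => hφ0 _) hφR1
    _ ≤ ∫ x, u x * LK n K (fun y => φ (R⁻¹ • y)) x := hsup _ hφR fun x => hφ0 _
    _ ≤ D * R ^ n * A := integral_mul_le_of_abs_le_mul_rpow hu (hLK R hR)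
    _ ≤ (D * A + 1) * R ^ (n : ℝ) := by
        rw [Real.rpow_natCast]
        nlinarith [pow_pos hR0 n]

/-- Polynomial growth of the local mass, Lemma 3.1:
`S(R) = ∫_{B_R} u^q ≤ C R^n` for all `R ≥ 1`. -/
theorem local_mass_polynomial_growth
    (n : ℕ) (hn : 1 ≤ n) (s : ℝ) (hs : s ∈ Set.Ioo (0 : ℝ) 1)
    (q : ℝ) (hq : 1 < q)
    (lam Lam : ℝ) (K : Euc n → ℝ) (hK : IsAdmissibleKernel n s lam Lam K)
    (u : Euc n → ℝ) (hu : IsWeakSupersol n s q K u) :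
    ∃ C : ℝ, 0 < C ∧ ∀ R : ℝ, 1 ≤ R →
      (∫ x in ball (0 : Euc n) R, u x ^ q) ≤ C * R ^ (n : ℝ) := by
  obtain ⟨-, hu0, huq, hutail, hsup⟩ := hu
  exact local_mass_polynomial_growth_general hs hK.isKernelBoundedBy hutail huq.locallyIntegrable
    (fun x => Real.rpow_nonneg (hu0 x) q) hsup
end
end

section
/- (Dyadic recursive inequality) Let n ≥ 1, s ∈ (0,1), q > 1, let K be an admissible kernel, and let u be a nonnegative weak supersolution of L_K u = u^q in ℝⁿ. Set a := n − 2s − n/q and b := 2s + n/q. Then there exists a constant C > 0 such that for every R ≥ 1, S(R) ≤ C R^{a} Σ_{k=0}^{∞} 2^{−kb} S(2^{k+1}R)^{1/q}, where S(ρ) := ∫_{B_ρ} u(x)^q dx. -/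
open MeasureTheory Metric

noncomputable section

/-!
Test the inequality with a cutoff `φ` that is `1` on `B_R` and `0` off `B_{2R}`. Where `φ` vanishes
it is minimal, so `L_K φ ≤ 0` there and the far field of `u` contributes with the favourable sign;
on `B_{2R}`, scaling gives `L_K φ ≤ C R^{-2s}`. Hence `S(R) ≤ C R^{-2s} ∫_{B_{2R}} u`, and Hölder's
inequality turns this into `S(R) ≤ C R^a S(2R)^{1/q}`: the term `k = 0` of the series suffices.
-/

section IntegralInequalities

variable {α : Type*} [MeasurableSpace α] {μ : Measure α}

lemma integral_mono_of_nonneg_right {f g : α → ℝ} (hg : Integrable g μ) (hg_nonneg : ∀ x, 0 ≤ g x)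
    (hfg : ∀ x, f x ≤ g x) : ∫ x, f x ∂μ ≤ ∫ x, g x ∂μ := by
  by_cases hf : Integrable f μ
  · exact integral_mono hf hg hfg
  · rw [integral_undef hf]
    exact integral_nonneg hg_nonneg

lemma memLp_of_integrable_rpow {f : α → ℝ} {q : ℝ} (hq : 0 < q) (hf_nonneg : ∀ x, 0 ≤ f x)
    (hf : Integrable (fun x => f x ^ q) μ) : MemLp f (ENNReal.ofReal q) μ := by
  have hf_meas : AEStronglyMeasurable f μ := by
    refine (hf.aemeasurable.pow_const (1 / q)).aestronglyMeasurable.congr (.of_forall fun x => ?_)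
    simp only [one_div, Real.rpow_rpow_inv (hf_nonneg x) hq.ne']
  rw [← integrable_norm_rpow_iff hf_meas (by simpa using hq) ENNReal.ofReal_ne_top,
    ENNReal.toReal_ofReal hq.le]
  simpa only [Real.norm_of_nonneg (hf_nonneg _)] using hf

lemma integral_le_rpow_integral_rpow_mul_measureReal_univ [IsFiniteMeasure μ] {f : α → ℝ} {q : ℝ}
    (hq : 1 ≤ q) (hf_nonneg : ∀ x, 0 ≤ f x) (hf : Integrable (fun x => f x ^ q) μ) :
    ∫ x, f x ∂μ ≤ (∫ x, f x ^ q ∂μ) ^ (1 / q) * μ.real Set.univ ^ (1 - 1 / q) := by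
  have hq_pos : 0 < q := by linarith
  have hLq : MemLp f (ENNReal.ofReal q) μ := memLp_of_integrable_rpow hq_pos hf_nonneg hf
  have one_le : 1 ≤ ENNReal.ofReal q := by simpa using hq
  have hL1 : MemLp f 1 μ := hLq.mono_exponent one_le
  have hHolder := eLpNorm_le_eLpNorm_mul_rpow_measure_univ one_le hLq.aestronglyMeasurable
  have hexp : 0 ≤ 1 - 1 / q := by
    rw [sub_nonneg, div_le_one hq_pos]
    exact hq
  rw [hL1.eLpNorm_eq_integral_rpow_norm one_ne_zero ENNReal.one_ne_top,
    hLq.eLpNorm_eq_integral_rpow_norm (by simpa using hq_pos) ENNReal.ofReal_ne_top,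
    ← ofReal_measureReal, ENNReal.toReal_one, ENNReal.toReal_ofReal hq_pos.le,
    ENNReal.ofReal_rpow_of_nonneg measureReal_nonneg (by simpa using hexp),
    ← ENNReal.ofReal_mul (by positivity), ENNReal.ofReal_le_ofReal_iff (by positivity)] at hHolder
  simpa only [Real.norm_of_nonneg (hf_nonneg _), Real.rpow_one, inv_one, div_one, one_div]
    using hHolder

end IntegralInequalities

lemma ofReal_le_ofReal_mul_tsum_of_le_mul {ι : Type*} {f : ι → ℝ} {a c : ℝ} (hc : 0 ≤ c) (i : ι)
    (h : a ≤ c * f i) :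
    ENNReal.ofReal a ≤ ENNReal.ofReal c * ∑' j, ENNReal.ofReal (f j) :=
  calc ENNReal.ofReal a ≤ ENNReal.ofReal (c * f i) := ENNReal.ofReal_le_ofReal h
    _ = ENNReal.ofReal c * ENNReal.ofReal (f i) := ENNReal.ofReal_mul hc
    _ ≤ ENNReal.ofReal c * ∑' j, ENNReal.ofReal (f j) := by
      gcongr
      exact ENNReal.le_tsum i

section SecondDifference

variable {E : Type*} [NormedAddCommGroup E]

/-- The negative second difference of `φ` at `x` with step `z`, the integrand of the symmetrized
nonlocal operator. -/
def negSecondDiff (φ : E → ℝ) (x z : E) : ℝ :=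
  2 * φ x - φ (x + z) - φ (x - z)

lemma negSecondDiff_zero_right (φ : E → ℝ) (x : E) : negSecondDiff φ x 0 = 0 := by
  simp only [negSecondDiff, add_zero, sub_zero]
  ring

variable [NormedSpace ℝ E]

lemma abs_negSecondDiff_le_of_lipschitzWith_fderiv {φ : E → ℝ} {M : NNReal}
    (hφ : Differentiable ℝ φ) (hM : LipschitzWith M (fderiv ℝ φ)) (x z : E) :
    |negSecondDiff φ x z| ≤ M * ‖z‖ ^ 2 := by
  -- The second difference is the increment from `x - z` to `x` of `y ↦ φ (y + z) - φ y`.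
  have hshift : Differentiable ℝ fun y => φ (y + z) := by fun_prop
  have hderiv : ∀ y, ‖fderiv ℝ (fun y => φ (y + z) - φ y) y‖ ≤ M * ‖z‖ := fun y => by
    rw [fderiv_fun_sub (hshift y) (hφ y), fderiv_comp_add_right]
    simpa [dist_eq_norm] using hM.dist_le_mul (y + z) y
  have hincr := convex_univ.norm_image_sub_le_of_norm_fderiv_le (𝕜 := ℝ)
    (fun y _ => (hshift y).sub (hφ y)) (fun y _ => hderiv y) (Set.mem_univ x) (Set.mem_univ (x - z))
  calc |negSecondDiff φ x z| = ‖φ (x - z + z) - φ (x - z) - (φ (x + z) - φ x)‖ := by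
        rw [sub_add_cancel, Real.norm_eq_abs, negSecondDiff]
        ring_nf
    _ ≤ M * ‖z‖ * ‖x - z - x‖ := hincr
    _ = M * ‖z‖ ^ 2 := by rw [sub_sub_cancel_left, norm_neg]; ring

lemma exists_negSecondDiff_le_mul_norm_sq {φ : E → ℝ} (hφ : ContDiff ℝ 2 φ)
    (hφ_supp : HasCompactSupport φ) :
    ∃ M : ℝ, 0 ≤ M ∧ ∀ x z, negSecondDiff φ x z ≤ M * ‖z‖ ^ 2 := by
  obtain ⟨M, hM⟩ := ContDiff.lipschitzWith_of_hasCompactSupport (hφ_supp.fderiv ℝ)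
    (hφ.fderiv_right (m := 1) (by norm_num)) one_ne_zero
  exact ⟨M, M.2, fun x z => (le_abs_self _).trans
    (abs_negSecondDiff_le_of_lipschitzWith_fderiv (hφ.differentiable two_ne_zero) hM x z)⟩

end SecondDifference

section KernelIntegrability

lemma integrableOn_Ioi_min_mul_rpow {s : ℝ} (hs : s ∈ Set.Ioo (0 : ℝ) 1) {a M : ℝ} (ha : 0 ≤ a)
    (hM : 0 ≤ M) :
    IntegrableOn (fun r : ℝ => min a (M * r ^ 2) * r ^ (-1 - 2 * s)) (Set.Ioi 0) := by
  obtain ⟨hs0, hs1⟩ := hs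
  have hmeas : Measurable fun r : ℝ => min a (M * r ^ 2) * r ^ (-1 - 2 * s) := by fun_prop
  rw [← Set.Ioc_union_Ioi_eq_Ioi zero_le_one]
  refine IntegrableOn.union ?near ?far
  case near =>
    have hdom : IntegrableOn (fun r : ℝ => M * r ^ (1 - 2 * s)) (Set.Ioc 0 1) :=
      ((intervalIntegrable_iff_integrableOn_Ioc_of_le zero_le_one).1
        (intervalIntegral.intervalIntegrable_rpow' (by linarith))).const_mul M
    refine hdom.mono' hmeas.aestronglyMeasurable
      (ae_restrict_of_forall_mem measurableSet_Ioc fun r ⟨hr, _⟩ => ?_)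
    rw [Real.norm_of_nonneg (by positivity)]
    calc min a (M * r ^ 2) * r ^ (-1 - 2 * s) ≤ M * r ^ 2 * r ^ (-1 - 2 * s) := by
          gcongr
          exact min_le_right _ _
      _ = M * r ^ (1 - 2 * s) := by
          rw [mul_assoc, ← Real.rpow_natCast, ← Real.rpow_add hr]
          congr 2
          push_cast
          ring
  case far =>
    have hdom : IntegrableOn (fun r : ℝ => a * r ^ (-1 - 2 * s)) (Set.Ioi 1) :=
      (integrableOn_Ioi_rpow_of_lt (by linarith) zero_lt_one).const_mul a
    refine hdom.mono' hmeas.aestronglyMeasurable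
      (ae_restrict_of_forall_mem measurableSet_Ioi fun r hr => ?_)
    have hr_pos : 0 < r := zero_lt_one.trans hr
    rw [Real.norm_of_nonneg (by positivity)]
    gcongr
    exact min_le_left _ _

variable {E : Type*} [NormedAddCommGroup E] [NormedSpace ℝ E] [FiniteDimensional ℝ E] [Nontrivial E]
  [MeasurableSpace E] [BorelSpace E]

lemma integrable_min_mul_norm_rpow (μ : Measure E) [μ.IsAddHaarMeasure] {s : ℝ}
    (hs : s ∈ Set.Ioo (0 : ℝ) 1) {a M : ℝ} (ha : 0 ≤ a) (hM : 0 ≤ M) :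
    Integrable
      (fun z : E => min a (M * ‖z‖ ^ 2) * ‖z‖ ^ (-(Module.finrank ℝ E : ℝ) - 2 * s)) μ := by
  rw [integrable_fun_norm_addHaar μ
    (f := fun r => min a (M * r ^ 2) * r ^ (-(Module.finrank ℝ E : ℝ) - 2 * s))]
  refine (integrableOn_congr_fun (fun r (hr : 0 < r) => ?_) measurableSet_Ioi).2
    (integrableOn_Ioi_min_mul_rpow hs ha hM)
  have hjacobian : r ^ (Module.finrank ℝ E - 1) = r ^ ((Module.finrank ℝ E : ℝ) - 1) := by
    rw [← Real.rpow_natCast, Nat.cast_pred Module.finrank_pos]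
  rw [smul_eq_mul, hjacobian, mul_left_comm, ← Real.rpow_add hr]
  congr 2
  ring

end KernelIntegrability

section NonlocalOperator

variable {E : Type*} [NormedAddCommGroup E] [MeasurableSpace E]

/-- The operator `L_K` with reference measure `μ`. As in `LK`, it is symmetrized,
so that no principal value is needed. -/
def nonlocalOp (μ : Measure E) (K φ : E → ℝ) (x : E) : ℝ :=
  (1 / 2) * ∫ z, negSecondDiff φ x z * K z ∂μ

variable {μ : Measure E} {s Λ : ℝ} {K φ : E → ℝ}

lemma nonlocalOp_nonpos_of_eq_zero (hK : ∀ z ≠ 0, 0 ≤ K z) (hφ : ∀ x, 0 ≤ φ x) {x : E}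
    (hx : φ x = 0) : nonlocalOp μ K φ x ≤ 0 := by
  refine mul_nonpos_of_nonneg_of_nonpos (by norm_num) (integral_nonpos fun z => ?_)
  obtain rfl | hz := eq_or_ne z 0
  · simp only [negSecondDiff_zero_right, zero_mul, Pi.zero_apply, le_refl]
  · refine mul_nonpos_of_nonpos_of_nonneg ?_ (hK z hz)
    rw [negSecondDiff, hx]
    linarith [hφ (x + z), hφ (x - z)]

variable [NormedSpace ℝ E]

/-- The upper half of admissibility, `0 ≤ K(z) ≤ Λ|z|^{-d-2s}` with `d = dim E`, which controls
`L_K φ` from above. Nothing is asked at `z = 0`, where the integrand of `nonlocalOp` vanishes. -/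
structure IsDominatedKernel (s Λ : ℝ) (K : E → ℝ) : Prop where
  measurable : Measurable K
  nonneg : ∀ z ≠ 0, 0 ≤ K z
  le : ∀ z ≠ 0, K z ≤ Λ * ‖z‖ ^ (-(Module.finrank ℝ E : ℝ) - 2 * s)

lemma IsDominatedKernel.const_nonneg [Nontrivial E] (hK : IsDominatedKernel s Λ K) : 0 ≤ Λ := by
  obtain ⟨z, hz⟩ := exists_ne (0 : E)
  exact nonneg_of_mul_nonneg_left ((hK.nonneg z hz).trans (hK.le z hz))
    (Real.rpow_pos_of_pos (norm_pos_iff.2 hz) _)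

lemma IsDominatedKernel.rescale [BorelSpace E] (hK : IsDominatedKernel s Λ K) {R : ℝ}
    (hR : 0 < R) :
    IsDominatedKernel s (Λ * R ^ (-(2 * s))) fun z => R ^ Module.finrank ℝ E * K (R • z) where
  measurable := (hK.measurable.comp (measurable_const_smul R)).const_mul _
  nonneg z hz := mul_nonneg (by positivity) (hK.nonneg _ (smul_ne_zero hR.ne' hz))
  le z hz := by
    have hpow : R ^ Module.finrank ℝ E * R ^ (-(Module.finrank ℝ E : ℝ) - 2 * s)
        = R ^ (-(2 * s)) := by
      rw [← Real.rpow_natCast, ← Real.rpow_add hR]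
      congr 1
      ring
    calc R ^ Module.finrank ℝ E * K (R • z)
        ≤ R ^ Module.finrank ℝ E * (Λ * ‖R • z‖ ^ (-(Module.finrank ℝ E : ℝ) - 2 * s)) := by
          gcongr
          exact hK.le _ (smul_ne_zero hR.ne' hz)
      _ = Λ * R ^ (-(2 * s)) * ‖z‖ ^ (-(Module.finrank ℝ E : ℝ) - 2 * s) := by
          rw [norm_smul, Real.norm_of_nonneg hR.le, Real.mul_rpow hR.le (norm_nonneg z), ← hpow]
          ring

variable [FiniteDimensional ℝ E] [BorelSpace E] [μ.IsAddHaarMeasure]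

lemma nonlocalOp_comp_inv_smul (K φ : E → ℝ) {R : ℝ} (hR : 0 < R) (x : E) :
    nonlocalOp μ K (fun y => φ (R⁻¹ • y)) x =
      nonlocalOp μ (fun z => R ^ Module.finrank ℝ E * K (R • z)) φ (R⁻¹ • x) := by
  have hchange := Measure.integral_comp_smul_of_nonneg μ
    (fun z => negSecondDiff (fun y => φ (R⁻¹ • y)) x z * K z) R (hR := hR.le)
  have hdiff : ∀ z, negSecondDiff (fun y => φ (R⁻¹ • y)) x (R • z)
      = negSecondDiff φ (R⁻¹ • x) z := fun z => by
    simp only [negSecondDiff, smul_add, smul_sub, inv_smul_smul₀ hR.ne']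
  simp only [hdiff, smul_eq_mul] at hchange
  simp only [nonlocalOp, mul_left_comm _ (R ^ _), integral_const_mul, hchange]
  field_simp

variable [Nontrivial E]

lemma exists_forall_nonlocalOp_le (μ : Measure E) [μ.IsAddHaarMeasure]
    (hs : s ∈ Set.Ioo (0 : ℝ) 1) (hφ : ContDiff ℝ 2 φ) (hφ_supp : HasCompactSupport φ)
    (hφ_mem : ∀ x, φ x ∈ Set.Icc (0 : ℝ) 1) :
    ∃ A : ℝ, 0 < A ∧ ∀ {Λ : ℝ} {K : E → ℝ}, IsDominatedKernel s Λ K →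
      ∀ x, nonlocalOp μ K φ x ≤ A * Λ := by
  obtain ⟨M, hM, hφM⟩ := exists_negSecondDiff_le_mul_norm_sq hφ hφ_supp
  set g : E → ℝ := fun z => min 2 (M * ‖z‖ ^ 2) * ‖z‖ ^ (-(Module.finrank ℝ E : ℝ) - 2 * s)
  have hg : Integrable g μ := integrable_min_mul_norm_rpow μ hs zero_le_two hM
  have hg_nonneg : ∀ z, 0 ≤ g z := fun z => by positivity
  have hconst : 0 < (1 / 2) * ∫ z, g z ∂μ + 1 :=
    add_pos_of_nonneg_of_pos (mul_nonneg one_half_pos.le (integral_nonneg hg_nonneg)) one_pos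
  refine ⟨(1 / 2) * ∫ z, g z ∂μ + 1, hconst, fun {Λ K} hK x => ?_⟩
  have hΛ : 0 ≤ Λ := hK.const_nonneg
  have hdiff : ∀ z, negSecondDiff φ x z ≤ min 2 (M * ‖z‖ ^ 2) := fun z =>
    le_min (by rw [negSecondDiff]; linarith [(hφ_mem x).2, (hφ_mem (x + z)).1, (hφ_mem (x - z)).1])
      (hφM x z)
  have hintegrand : ∀ z, negSecondDiff φ x z * K z ≤ Λ * g z := fun z => by
    obtain rfl | hz := eq_or_ne z 0
    · rw [negSecondDiff_zero_right, zero_mul]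
      exact mul_nonneg hΛ (hg_nonneg 0)
    calc negSecondDiff φ x z * K z ≤ min 2 (M * ‖z‖ ^ 2) * K z :=
          mul_le_mul_of_nonneg_right (hdiff z) (hK.nonneg z hz)
      _ ≤ min 2 (M * ‖z‖ ^ 2) * (Λ * ‖z‖ ^ (-(Module.finrank ℝ E : ℝ) - 2 * s)) := by
          gcongr
          exact hK.le z hz
      _ = Λ * g z := mul_left_comm _ _ _
  have hintegral : ∫ z, negSecondDiff φ x z * K z ∂μ ≤ Λ * ∫ z, g z ∂μ := by
    rw [← integral_const_mul]
    exact integral_mono_of_nonneg_right (hg.const_mul Λ)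
      (fun z => mul_nonneg hΛ (hg_nonneg z)) hintegrand
  rw [nonlocalOp]
  linarith

end NonlocalOperator

section Cutoff

variable {E : Type*} [NormedAddCommGroup E] [NormedSpace ℝ E] [FiniteDimensional ℝ E]

/-- The bump functions equal to `1` on the ball of radius `R` and supported in the ball of radius
`2 * R`; for varying `R` they are dilates of one another. -/
def dyadicCutoff (E : Type*) [NormedAddCommGroup E] [NormedSpace ℝ E] {R : ℝ} (hR : 0 < R) :
    ContDiffBump (0 : E) :=
  ⟨R, 2 * R, hR, by linarith⟩

lemma dyadicCutoff_apply {R : ℝ} (hR : 0 < R) (x : E) :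
    dyadicCutoff E hR x = dyadicCutoff E one_pos (R⁻¹ • x) := by
  simp only [ContDiffBump.apply, dyadicCutoff, mul_div_cancel_right₀ _ hR.ne', mul_one, div_one,
    sub_zero, inv_one, one_smul]

lemma exists_forall_nonlocalOp_dyadicCutoff_le [Nontrivial E] [MeasurableSpace E] [BorelSpace E]
    (μ : Measure E) [μ.IsAddHaarMeasure] {s : ℝ} (hs : s ∈ Set.Ioo (0 : ℝ) 1) :
    ∃ A : ℝ, 0 < A ∧ ∀ {Λ : ℝ} {K : E → ℝ}, IsDominatedKernel s Λ K →
      ∀ {R : ℝ} (hR : 0 < R) (x : E),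
        nonlocalOp μ K (dyadicCutoff E hR) x ≤ A * (Λ * R ^ (-(2 * s))) := by
  let ψ := dyadicCutoff E one_pos
  obtain ⟨A, hA, hbound⟩ := exists_forall_nonlocalOp_le μ hs ψ.contDiff ψ.hasCompactSupport
    fun x => ⟨ψ.nonneg, ψ.le_one⟩
  refine ⟨A, hA, fun hK R hR x => ?_⟩
  rw [funext (dyadicCutoff_apply hR), nonlocalOp_comp_inv_smul _ _ hR]
  exact hbound (hK.rescale hR) _

end Cutoff

section Supersolution

variable {E : Type*} [NormedAddCommGroup E] [NormedSpace ℝ E] [MeasurableSpace E]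

/-- Nonnegative weak supersolutions of `L_K u = u^q` on a normed space. The condition
`integrable_tail`, that is `u ∈ L¹_{2s}`, makes `u * L_K φ` integrable for dominated kernels, so the
right-hand side of `integral_rpow_mul_le` is not the junk value `0`. -/
structure IsWeakSupersolution (μ : Measure E) (s q : ℝ) (K u : E → ℝ) : Prop where
  nonneg : ∀ x, 0 ≤ u x
  locallyIntegrable_rpow : LocallyIntegrable (fun x => u x ^ q) μ
  integrable_tail :
    Integrable (fun x => u x * (1 + ‖x‖) ^ (-(Module.finrank ℝ E : ℝ) - 2 * s)) μ
  integral_rpow_mul_le : ∀ φ : E → ℝ, ContDiff ℝ (⊤ : ℕ∞) φ → HasCompactSupport φ →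
    (∀ x, 0 ≤ φ x) → ∫ x, u x ^ q * φ x ∂μ ≤ ∫ x, u x * nonlocalOp μ K φ x ∂μ

variable {μ : Measure E} {s q : ℝ} {K u φ : E → ℝ}

lemma IsWeakSupersolution.setIntegral_rpow_le [OpensMeasurableSpace E]
    (hu : IsWeakSupersolution μ s q K u) (hK : ∀ z ≠ 0, 0 ≤ K z) (hφ : ContDiff ℝ (⊤ : ℕ∞) φ)
    (hφ_supp : HasCompactSupport φ) (hφ_nonneg : ∀ x, 0 ≤ φ x) {S T : Set E}
    (hS : MeasurableSet S) (hT : MeasurableSet T)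
    (hφS : ∀ x ∈ S, 1 ≤ φ x) (hφT : ∀ x ∉ T, φ x = 0) (huT : IntegrableOn u T μ) {A : ℝ}
    (hA : 0 ≤ A) (hφA : ∀ x, nonlocalOp μ K φ x ≤ A) :
    ∫ x in S, u x ^ q ∂μ ≤ A * ∫ x in T, u x ∂μ := by
  have huq_nonneg : ∀ x, 0 ≤ u x ^ q := fun x => Real.rpow_nonneg (hu.nonneg x) q
  have hlower : ∫ x in S, u x ^ q ∂μ ≤ ∫ x, u x ^ q * φ x ∂μ := by
    rw [← integral_indicator hS]
    refine integral_mono_of_nonneg_right ?_ (fun x => mul_nonneg (huq_nonneg x) (hφ_nonneg x))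
      (Set.indicator_le' (fun x hx => le_mul_of_one_le_right (huq_nonneg x) (hφS x hx))
        fun x _ => mul_nonneg (huq_nonneg x) (hφ_nonneg x))
    simpa only [smul_eq_mul, mul_comm] using
      hu.locallyIntegrable_rpow.integrable_smul_left_of_hasCompactSupport hφ.continuous hφ_supp
  have hupper : ∫ x, u x * nonlocalOp μ K φ x ∂μ ≤ ∫ x in T, A * u x ∂μ := by
    rw [← integral_indicator hT]
    refine integral_mono_of_nonneg_right ((integrable_indicator_iff hT).2 (huT.const_mul A))
      (Set.indicator_nonneg fun x _ => mul_nonneg hA (hu.nonneg x)) fun x => ?_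
    by_cases hx : x ∈ T
    · rw [Set.indicator_of_mem hx, mul_comm A]
      exact mul_le_mul_of_nonneg_left (hφA x) (hu.nonneg x)
    · rw [Set.indicator_of_notMem hx]
      exact mul_nonpos_of_nonneg_of_nonpos (hu.nonneg x)
        (nonlocalOp_nonpos_of_eq_zero hK hφ_nonneg (hφT x hx))
  calc ∫ x in S, u x ^ q ∂μ ≤ ∫ x, u x ^ q * φ x ∂μ := hlower
    _ ≤ ∫ x, u x * nonlocalOp μ K φ x ∂μ := hu.integral_rpow_mul_le φ hφ hφ_supp hφ_nonneg
    _ ≤ ∫ x in T, A * u x ∂μ := hupper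
    _ = A * ∫ x in T, u x ∂μ := integral_const_mul _ _

variable [FiniteDimensional ℝ E]

lemma IsWeakSupersolution.integrableOn_ball_rpow (hu : IsWeakSupersolution μ s q K u) (x : E)
    (r : ℝ) : IntegrableOn (fun x => u x ^ q) (ball x r) μ :=
  (hu.locallyIntegrable_rpow.integrableOn_isCompact (isCompact_closedBall x r)).mono_set
    ball_subset_closedBall

lemma IsWeakSupersolution.integrableOn_ball [IsFiniteMeasureOnCompacts μ]
    (hu : IsWeakSupersolution μ s q K u) (hq : 1 ≤ q) (x : E) (r : ℝ) :
    IntegrableOn u (ball x r) μ := by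
  have : IsFiniteMeasure (μ.restrict (ball x r)) :=
    isFiniteMeasure_restrict.2 measure_ball_lt_top.ne
  exact (memLp_of_integrable_rpow (zero_lt_one.trans_le hq) hu.nonneg
    (hu.integrableOn_ball_rpow x r)).integrable (by simpa using hq)

variable [BorelSpace E]

lemma IsWeakSupersolution.setIntegral_ball_le [μ.IsAddHaarMeasure]
    (hu : IsWeakSupersolution μ s q K u) (hq : 1 ≤ q) {r : ℝ} (hr : 0 < r) :
    ∫ x in ball 0 r, u x ∂μ ≤ (∫ x in ball 0 r, u x ^ q ∂μ) ^ (1 / q) *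
      (r ^ Module.finrank ℝ E * μ.real (ball 0 1)) ^ (1 - 1 / q) := by
  have hvol : (μ.restrict (ball 0 r)).real Set.univ
      = r ^ Module.finrank ℝ E * μ.real (ball 0 1) := by
    rw [measureReal_restrict_apply_univ, measureReal_def, Measure.addHaar_ball_of_pos μ 0 hr,
      ENNReal.toReal_mul, ENNReal.toReal_ofReal (by positivity), measureReal_def]
  have : IsFiniteMeasure (μ.restrict (ball 0 r)) :=
    isFiniteMeasure_restrict.2 measure_ball_lt_top.ne
  rw [← hvol]
  exact integral_le_rpow_integral_rpow_mul_measureReal_univ hq hu.nonneg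
    (hu.integrableOn_ball_rpow 0 r)

theorem dyadic_recursive_inequality_general [Nontrivial E] (μ : Measure E) [μ.IsAddHaarMeasure]
    (hs : s ∈ Set.Ioo (0 : ℝ) 1) (hq : 1 ≤ q) :
    ∃ C : ℝ, 0 < C ∧ ∀ {Λ : ℝ} {K u : E → ℝ},
      IsDominatedKernel s Λ K → IsWeakSupersolution μ s q K u → ∀ {R : ℝ}, 0 < R →
        ∫ x in ball 0 R, u x ^ q ∂μ ≤
          C * Λ * R ^ ((Module.finrank ℝ E : ℝ) - 2 * s - (Module.finrank ℝ E : ℝ) / q) *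
            (∫ x in ball 0 (2 * R), u x ^ q ∂μ) ^ (1 / q) := by
  obtain ⟨A, hA, hcutoff⟩ := exists_forall_nonlocalOp_dyadicCutoff_le μ hs
  set d := Module.finrank ℝ E
  set V : ℝ := μ.real (ball 0 1)
  have hV : 0 < V := ENNReal.toReal_pos (measure_ball_pos μ 0 one_pos).ne' measure_ball_lt_top.ne
  refine ⟨A * (2 ^ d * V) ^ (1 - 1 / q), by positivity, fun {Λ K u} hK hu R hR => ?_⟩
  have hΛ : 0 ≤ Λ := hK.const_nonneg
  let φ := dyadicCutoff E hR
  have hexp : (R ^ d) ^ (1 - 1 / q) * R ^ (-(2 * s)) = R ^ ((d : ℝ) - 2 * s - d / q) := by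
    rw [← Real.rpow_natCast, ← Real.rpow_mul hR.le, ← Real.rpow_add hR]
    congr 1
    ring
  calc ∫ x in ball 0 R, u x ^ q ∂μ
      ≤ A * (Λ * R ^ (-(2 * s))) * ∫ x in ball 0 (2 * R), u x ∂μ :=
        hu.setIntegral_rpow_le hK.nonneg φ.contDiff φ.hasCompactSupport (fun _ => φ.nonneg)
          measurableSet_ball measurableSet_ball
          (fun x hx => (φ.one_of_mem_closedBall (ball_subset_closedBall hx)).ge)
          (fun x hx => φ.zero_of_le_dist (not_lt.1 hx)) (hu.integrableOn_ball hq 0 _)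
          (by positivity) (hcutoff hK hR)
    _ ≤ A * (Λ * R ^ (-(2 * s))) * ((∫ x in ball 0 (2 * R), u x ^ q ∂μ) ^ (1 / q) *
          ((2 * R) ^ d * V) ^ (1 - 1 / q)) := by
        gcongr
        exact hu.setIntegral_ball_le hq (by positivity)
    _ = A * (2 ^ d * V) ^ (1 - 1 / q) * Λ * R ^ ((d : ℝ) - 2 * s - d / q) *
          (∫ x in ball 0 (2 * R), u x ^ q ∂μ) ^ (1 / q) := by
        rw [← hexp, mul_pow, mul_right_comm _ _ V, Real.mul_rpow (by positivity) (by positivity)]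
        ring

end Supersolution

lemma IsAdmissibleKernel.isDominatedKernel {n : ℕ} {s lam Lam : ℝ} {K : Euc n → ℝ}
    (hK : IsAdmissibleKernel n s lam Lam K) : IsDominatedKernel s Lam K := by
  obtain ⟨hlam, -, hmeas, -, hbounds⟩ := hK
  refine ⟨hmeas, fun z hz => le_trans (by positivity) (hbounds z hz).1, fun z hz => ?_⟩
  simpa only [finrank_euclideanSpace_fin] using (hbounds z hz).2

lemma IsWeakSupersol.isWeakSupersolution {n : ℕ} {s q : ℝ} {K u : Euc n → ℝ}
    (hu : IsWeakSupersol n s q K u) : IsWeakSupersolution volume s q K u := by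
  obtain ⟨-, hnonneg, hLq, ⟨-, htail⟩, htest⟩ := hu
  refine ⟨hnonneg, fun x => ⟨ball 0 (‖x‖ + 1), isOpen_ball.mem_nhds ?_, hLq _ (by positivity)⟩, ?_,
    fun φ hφ hφ_supp hφ_nonneg => htest φ ⟨hφ, hφ_supp⟩ hφ_nonneg⟩
  · simp only [mem_ball_zero_iff, lt_add_iff_pos_right, zero_lt_one]
  · simpa only [finrank_euclideanSpace_fin, abs_of_nonneg (hnonneg _)] using htail

/-- Dyadic recursive inequality, Lemma 3.2: with `a = n - 2s - n/q` and
`b = 2s + n/q`, `S(R) ≤ C R^a Σ_{k≥0} 2^{-kb} S(2^{k+1}R)^{1/q}` for all `R ≥ 1`.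
The series is taken in `ℝ≥0∞` (it may be `+∞`, in which case the bound is trivial). -/
theorem dyadic_recursive_inequality
    (n : ℕ) (hn : 1 ≤ n) (s : ℝ) (hs : s ∈ Set.Ioo (0 : ℝ) 1)
    (q : ℝ) (hq : 1 < q)
    (lam Lam : ℝ) (K : Euc n → ℝ) (hK : IsAdmissibleKernel n s lam Lam K)
    (u : Euc n → ℝ) (hu : IsWeakSupersol n s q K u) :
    ∃ C : ℝ, 0 < C ∧ ∀ R : ℝ, 1 ≤ R →
      ENNReal.ofReal (∫ x in ball (0 : Euc n) R, u x ^ q) ≤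
        ENNReal.ofReal (C * R ^ ((n : ℝ) - 2 * s - (n : ℝ) / q)) *
          ∑' k : ℕ, ENNReal.ofReal
            ((2 : ℝ) ^ (-(k : ℝ) * (2 * s + (n : ℝ) / q)) *
              (∫ x in ball (0 : Euc n) ((2 : ℝ) ^ (k + 1) * R), u x ^ q) ^ (1 / q)) := by
  have : Nonempty (Fin n) := Fin.pos_iff_nonempty.1 hn
  have hLam : 0 < Lam := hK.1.trans_le hK.2.1
  obtain ⟨C, hC, hbound⟩ := dyadic_recursive_inequality_general (E := Euc n) volume hs hq.le
  refine ⟨C * Lam, by positivity, fun R hR => ?_⟩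
  have hR_pos : 0 < R := by linarith
  refine ofReal_le_ofReal_mul_tsum_of_le_mul (by positivity) 0 ?_
  simpa using hbound hK.isDominatedKernel hu.isWeakSupersolution hR_pos
end
end

section
/- (Abstract subcritical iteration) Let n ≥ 1, q > 1, a < 0 and b > n/q be real numbers. Let S : [1,∞) → [0,∞) be nondecreasing and suppose there exist constants C₀, C₁ > 0 such that S(R) ≤ C₀ Rⁿ for all R ≥ 1 and S(R) ≤ C₁ R^{a} Σ_{k=0}^{∞} 2^{−kb} S(2^{k+1}R)^{1/q} for all R ≥ 1. Then S(R) = 0 for all R ≥ 1. -/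
open MeasureTheory Metric

noncomputable section

/-!
If `S = O(R ^ m)` then, since `θ * m < b`, the series on the right-hand side is dominated by a
geometric one and is `O(R ^ (θ * m))`; the recursive inequality thus improves the growth exponent
from `m` to `a + θ * m`. On `[0, N]` this affine map lowers the exponent by a fixed positive amount,
so after finitely many rounds the exponent is negative, and a nonnegative nondecreasing function
tending to zero vanishes.
-/

open Filter Set Asymptotics
open scoped Topology ENNReal

/-- The sum of the powers `S(ρ ^ (k + 1) R) ^ θ` over the geometric scales above `R`, with weights
`ρ ^ (-k b)`; it bounds `S R` in the recursive inequality, classically with `ρ = 2`, `θ = 1 / q`.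
It takes values in `ℝ≥0∞` so that a divergent series is `∞` rather than `0`. -/
def weightedScaleSum (ρ b θ : ℝ) (S : ℝ → ℝ) (R : ℝ) : ℝ≥0∞ :=
  ∑' k : ℕ, ENNReal.ofReal (ρ ^ (-(k : ℝ) * b) * S (ρ ^ (k + 1) * R) ^ θ)

theorem eq_of_monotoneOn_of_tendsto {α β : Type*} [SemilatticeSup α] [PartialOrder β]
    [TopologicalSpace β] [ClosedIciTopology β] {f : α → β} {x₀ : α} {c : β}
    (hmono : MonotoneOn f (Ici x₀)) (hle : ∀ x, x₀ ≤ x → c ≤ f x)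
    (hlim : Tendsto f atTop (𝓝 c)) {x : α} (hx : x₀ ≤ x) : f x = c := by
  have : Nonempty α := ⟨x⟩
  refine le_antisymm (ge_of_tendsto hlim ?_) (hle x hx)
  filter_upwards [eventually_ge_atTop x] with y hxy
  exact hmono hx (hx.trans hxy) hxy

theorem exists_neg_of_descent {G : Type*} [AddCommGroup G] [LinearOrder G] [IsOrderedAddMonoid G]
    [Archimedean G] {P : G → Prop} {N δ : G} (hδ : 0 < δ) (hN : P N)
    (hstep : ∀ m, 0 ≤ m → m ≤ N → P m → ∃ m' ≤ m - δ, P m') : ∃ m < 0, P m := by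
  by_contra! hpos
  have hdesc (j : ℕ) : ∃ m ≤ N - j • δ, P m := by
    induction j with
    | zero => exact ⟨N, by simp, hN⟩
    | succ j ih =>
      obtain ⟨m, hm, hPm⟩ := ih
      have hm0 : 0 ≤ m := not_lt.1 fun h => hpos m h hPm
      have hmN : m ≤ N := hm.trans (sub_le_self N (nsmul_nonneg hδ.le j))
      obtain ⟨m', hm', hPm'⟩ := hstep m hm0 hmN hPm
      refine ⟨m', ?_, hPm'⟩
      rw [succ_nsmul, ← sub_sub]
      exact hm'.trans (sub_le_sub_right hm δ)
  obtain ⟨j, hj⟩ := exists_lt_nsmul hδ N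
  obtain ⟨m, hm, hPm⟩ := hdesc j
  exact hpos m (hm.trans_lt (sub_neg.2 hj)) hPm

/-- The decrease `m - (a + θ * m)` is affine in `m`, so on `[0, N]` its minimum is at an
endpoint. -/
theorem add_mul_le_sub_min {𝕜 : Type*} [CommRing 𝕜] [LinearOrder 𝕜] [IsStrictOrderedRing 𝕜]
    {a θ N m : 𝕜} (hm : 0 ≤ m) (hmN : m ≤ N) :
    a + θ * m ≤ m - min (-a) (N - (a + θ * N)) := by
  rcases le_total θ 1 with hθ | hθ
  · linarith [min_le_left (-a) (N - (a + θ * N)), mul_le_of_le_one_left hm hθ]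
  · have : (θ - 1) * m ≤ (θ - 1) * N := mul_le_mul_of_nonneg_left hmN (sub_nonneg.2 hθ)
    linarith [min_le_right (-a) (N - (a + θ * N))]

theorem isBigO_rpow_atTop_iff_of_nonneg {S : ℝ → ℝ} {m : ℝ} (hnonneg : ∀ᶠ R in atTop, 0 ≤ S R) :
    (S =O[atTop] fun R => R ^ m) ↔ ∃ C ≥ 0, ∀ᶠ R in atTop, S R ≤ C * R ^ m := by
  have hnorm (C : ℝ) : (∀ᶠ R in atTop, ‖S R‖ ≤ C * ‖R ^ m‖) ↔ ∀ᶠ R in atTop, S R ≤ C * R ^ m := by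
    refine eventually_congr ?_
    filter_upwards [hnonneg, eventually_ge_atTop 0] with R hS hR
    rw [Real.norm_of_nonneg hS, Real.norm_of_nonneg (Real.rpow_nonneg hR m)]
  simp only [← hnorm]
  exact ⟨fun h => h.exists_nonneg.imp fun C hC => ⟨hC.1, hC.2.bound⟩,
    fun ⟨C, _, hC⟩ => IsBigO.of_bound C hC⟩

theorem weight_mul_scale_rpow_eq {ρ C R : ℝ} (hρ : 0 < ρ) (hC : 0 ≤ C) (hR : 0 ≤ R)
    (b θ m : ℝ) (k : ℕ) :
    ρ ^ (-(k : ℝ) * b) * (C * (ρ ^ (k + 1) * R) ^ m) ^ θ =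
      (C * ρ ^ m) ^ θ * R ^ (θ * m) * (ρ ^ (θ * m - b)) ^ k := by
  have hscale : C * (ρ ^ (k + 1) * R) ^ m = C * ρ ^ m * ρ ^ (k * m) * R ^ m := by
    rw [pow_succ, Real.mul_rpow (by positivity) hR, Real.mul_rpow (by positivity) hρ.le,
      ← Real.rpow_natCast_mul hρ.le]
    ring
  have hpow : (C * ρ ^ m * ρ ^ (k * m) * R ^ m) ^ θ =
      (C * ρ ^ m) ^ θ * R ^ (θ * m) * ρ ^ (k * m * θ) := by
    rw [Real.mul_rpow (by positivity) (by positivity),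
      Real.mul_rpow (by positivity) (by positivity), ← Real.rpow_mul hρ.le, ← Real.rpow_mul hR,
      mul_comm m θ, mul_right_comm]
  rw [hscale, hpow, ← Real.rpow_mul_natCast hρ.le, mul_left_comm, ← Real.rpow_add hρ]
  ring_nf

theorem weightedScaleSum_le {ρ b θ m C R : ℝ} {S : ℝ → ℝ} (hρ : 1 < ρ) (hθ : 0 ≤ θ)
    (hb : θ * m < b) (hC : 0 ≤ C) (hR : 0 < R) (hS : ∀ x ≥ R, 0 ≤ S x ∧ S x ≤ C * x ^ m) :
    weightedScaleSum ρ b θ S R ≤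
      ENNReal.ofReal ((C * ρ ^ m) ^ θ * R ^ (θ * m) * (1 - ρ ^ (θ * m - b))⁻¹) := by
  have hρ0 : 0 < ρ := one_pos.trans hρ
  have hratio : ρ ^ (θ * m - b) < 1 := Real.rpow_lt_one_of_one_lt_of_neg hρ (sub_neg.2 hb)
  have hgeom := (hasSum_geometric_of_lt_one (by positivity) hratio).mul_left
    ((C * ρ ^ m) ^ θ * R ^ (θ * m))
  rw [← hgeom.tsum_eq, ENNReal.ofReal_tsum_of_nonneg (fun k => by positivity) hgeom.summable]
  refine ENNReal.tsum_le_tsum fun k => ENNReal.ofReal_le_ofReal ?_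
  obtain ⟨hS0, hSC⟩ := hS (ρ ^ (k + 1) * R) (le_mul_of_one_le_left hR.le (one_le_pow₀ hρ.le))
  rw [← weight_mul_scale_rpow_eq hρ0 hC hR.le]
  gcongr

theorem isBigO_rpow_add_mul_of_le_weightedScaleSum {ρ a b θ m C₁ : ℝ} {S : ℝ → ℝ}
    (hρ : 1 < ρ) (hθ : 0 ≤ θ) (hb : θ * m < b) (hC₁ : 0 ≤ C₁) (hnonneg : ∀ᶠ R in atTop, 0 ≤ S R)
    (hrec : ∀ᶠ R in atTop,
      ENNReal.ofReal (S R) ≤ ENNReal.ofReal (C₁ * R ^ a) * weightedScaleSum ρ b θ S R)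
    (hgrowth : S =O[atTop] fun R => R ^ m) : S =O[atTop] fun R => R ^ (a + θ * m) := by
  rw [isBigO_rpow_atTop_iff_of_nonneg hnonneg] at hgrowth ⊢
  obtain ⟨C, hC, hbound⟩ := hgrowth
  have hratio : ρ ^ (θ * m - b) < 1 := Real.rpow_lt_one_of_one_lt_of_neg hρ (sub_neg.2 hb)
  have hgeom : 0 ≤ (1 - ρ ^ (θ * m - b))⁻¹ := inv_nonneg.2 (sub_nonneg.2 hratio.le)
  refine ⟨C₁ * (C * ρ ^ m) ^ θ * (1 - ρ ^ (θ * m - b))⁻¹, mul_nonneg (by positivity) hgeom, ?_⟩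
  filter_upwards [hrec, eventually_forall_ge_atTop.2 (hnonneg.and hbound), eventually_gt_atTop 0]
    with R hRrec hRS hR
  calc S R ≤ C₁ * R ^ a * ((C * ρ ^ m) ^ θ * R ^ (θ * m) * (1 - ρ ^ (θ * m - b))⁻¹) := by
        rw [← ENNReal.ofReal_le_ofReal_iff (by positivity), ENNReal.ofReal_mul (by positivity)]
        exact hRrec.trans (by gcongr; exact weightedScaleSum_le hρ hθ hb hC hR hRS)
    _ = C₁ * (C * ρ ^ m) ^ θ * (1 - ρ ^ (θ * m - b))⁻¹ * R ^ (a + θ * m) := by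
        rw [Real.rpow_add hR]
        ring

/-- For `1 < θ`, the hypothesis `hN` says that `N` lies below the repelling fixed point
`a / (1 - θ)` of `m ↦ a + θ * m`, so that the exponents move away from it towards `-∞`. -/
theorem abstract_subcritical_iteration_general {ρ θ a b N C₁ R₀ : ℝ} {S : ℝ → ℝ}
    (hρ : 1 < ρ) (hθ : 0 ≤ θ) (ha : a < 0) (hN : a + θ * N < N) (hb : θ * N < b) (hC₁ : 0 ≤ C₁)
    (hnonneg : ∀ R, R₀ ≤ R → 0 ≤ S R) (hmono : MonotoneOn S (Ici R₀))
    (hgrowth : S =O[atTop] fun R => R ^ N)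
    (hrec : ∀ᶠ R in atTop,
      ENNReal.ofReal (S R) ≤ ENNReal.ofReal (C₁ * R ^ a) * weightedScaleSum ρ b θ S R) :
    ∀ R, R₀ ≤ R → S R = 0 := by
  have hdrop : 0 < min (-a) (N - (a + θ * N)) := lt_min (neg_pos.2 ha) (sub_pos.2 hN)
  have hnonneg' : ∀ᶠ R in atTop, 0 ≤ S R := (eventually_ge_atTop R₀).mono hnonneg
  obtain ⟨m, hm, hSm⟩ : ∃ m < (0 : ℝ), S =O[atTop] fun R => R ^ m := by
    refine exists_neg_of_descent (P := fun m => S =O[atTop] fun R => R ^ m) hdrop hgrowth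
      fun m hm0 hmN hSm => ⟨a + θ * m, add_mul_le_sub_min hm0 hmN, ?_⟩
    have hmb : θ * m < b := (mul_le_mul_of_nonneg_left hmN hθ).trans_lt hb
    exact isBigO_rpow_add_mul_of_le_weightedScaleSum hρ hθ hmb hC₁ hnonneg' hrec hSm
  have hlim : Tendsto S atTop (𝓝 0) :=
    hSm.trans_tendsto (by simpa using tendsto_rpow_neg_atTop (neg_pos.2 hm))
  exact fun R => eq_of_monotoneOn_of_tendsto hmono hnonneg hlim

/-- Abstract subcritical iteration: if `S : [1,∞) → [0,∞)` is nondecreasing,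
`S(R) ≤ C₀ R^n`, and `S(R) ≤ C₁ R^a Σ_{k≥0} 2^{-kb} S(2^{k+1}R)^{1/q}` (series in `ℝ≥0∞`)
with `a < 0` and `b > n/q`, then `S ≡ 0` on `[1,∞)`. -/
theorem abstract_subcritical_iteration
    (n : ℕ) (hn : 1 ≤ n) (q a b : ℝ) (hq : 1 < q) (ha : a < 0) (hb : (n : ℝ) / q < b)
    (S : ℝ → ℝ) (hSnonneg : ∀ R : ℝ, 1 ≤ R → 0 ≤ S R)
    (hSmono : ∀ R R' : ℝ, 1 ≤ R → R ≤ R' → S R ≤ S R')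
    (C₀ C₁ : ℝ) (hC₀ : 0 < C₀) (hC₁ : 0 < C₁)
    (hgrowth : ∀ R : ℝ, 1 ≤ R → S R ≤ C₀ * R ^ (n : ℝ))
    (hrec : ∀ R : ℝ, 1 ≤ R →
      ENNReal.ofReal (S R) ≤
        ENNReal.ofReal (C₁ * R ^ a) *
          ∑' k : ℕ, ENNReal.ofReal
            ((2 : ℝ) ^ (-(k : ℝ) * b) * (S ((2 : ℝ) ^ (k + 1) * R)) ^ (1 / q))) :
    ∀ R : ℝ, 1 ≤ R → S R = 0 := by
  have hqn : 1 / q * n ≤ n :=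
    mul_le_of_le_one_left n.cast_nonneg ((div_le_one (one_pos.trans hq)).2 hq.le)
  have hgrowthO : S =O[atTop] fun R => R ^ (n : ℝ) :=
    (isBigO_rpow_atTop_iff_of_nonneg ((eventually_ge_atTop 1).mono hSnonneg)).2
      ⟨C₀, hC₀.le, (eventually_ge_atTop 1).mono hgrowth⟩
  exact abstract_subcritical_iteration_general one_lt_two (by positivity) ha (by linarith)
    (by rwa [one_div_mul_eq_div]) hC₁.le hSnonneg (fun R hR R' _ => hSmono R R' hR)
    hgrowthO ((eventually_ge_atTop 1).mono hrec)
end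
end

section
/- (Abstract critical iteration) Let n ≥ 1, q > 1 and b > n/q be real numbers. Let S : [1,∞) → [0,∞) be nondecreasing and suppose there exist constants C₀, C₁ > 0 such that S(R) ≤ C₀ Rⁿ for all R ≥ 1 and S(R) ≤ C₁ Σ_{k=0}^{∞} 2^{−kb} S(2^{k+1}R)^{1/q} for all R ≥ 1. Then sup_{R ≥ 1} S(R) < ∞. -/
open MeasureTheory Metric

noncomputable section

/-!
Write the recursion as `f R ≤ ∑ i, w i * f (a i * R) ^ r` with `a i ≥ 1`, and put
`Λ = ∑ i, w i * a i ^ (d * r)`; for a geometric weight `Λ` is finite exactly because `b > d / q`.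
If `f R ≤ A * R ^ m` with `m ≤ d`, the recursion gives `f R ≤ Λ * A ^ r * R ^ (m * r)`.
Once `A ≥ Λ ^ (1 / (1 - r))`, the factor `Λ * A ^ r` is at most `A`: the exponent contracts by `r`
while the constant stays put. Starting from `m = d`, the exponents `d * r ^ j` tend to `0` and the
bound `f R ≤ A` remains.
-/

section DilationInequality

open Filter Topology
open scoped ENNReal

lemma mul_rpow_le_self_of_rpow_inv_le {r : ℝ} {Λ A : ℝ≥0∞} (hr0 : 0 ≤ r) (hr1 : r < 1)
    (hΛ : Λ ^ (1 - r)⁻¹ ≤ A) : Λ * A ^ r ≤ A := by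
  have h1r : 0 < 1 - r := sub_pos.2 hr1
  calc
    Λ * A ^ r ≤ A ^ (1 - r) * A ^ r := by gcongr; exact (ENNReal.rpow_inv_le_iff h1r).1 hΛ
    _ = A := by rw [← ENNReal.rpow_add_of_nonneg _ _ h1r.le hr0, sub_add_cancel, ENNReal.rpow_one]

variable {ι : Type*} {a : ι → ℝ} {w : ι → ℝ≥0∞} {f : ℝ → ℝ≥0∞} {r d : ℝ}

lemma tsum_dilation_le {R m : ℝ} {A : ℝ≥0∞} (hr : 0 ≤ r) (ha : ∀ i, 1 ≤ a i) (hmd : m ≤ d)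
    (hf : ∀ i, f (a i * R) ≤ A * ENNReal.ofReal (a i * R) ^ m) :
    ∑' i, w i * f (a i * R) ^ r ≤
      (∑' i, w i * ENNReal.ofReal (a i) ^ (d * r)) * A ^ r * ENNReal.ofReal R ^ (m * r) := by
  rw [mul_assoc, ← ENNReal.tsum_mul_right]
  refine ENNReal.tsum_le_tsum fun i => ?_
  have ha_nonneg : 0 ≤ a i := zero_le_one.trans (ha i)
  calc
    w i * f (a i * R) ^ r ≤ w i * (A * ENNReal.ofReal (a i * R) ^ m) ^ r := by
      gcongr; exact hf i
    _ = w i * ENNReal.ofReal (a i) ^ (m * r) * (A ^ r * ENNReal.ofReal R ^ (m * r)) := by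
      rw [ENNReal.mul_rpow_of_nonneg _ _ hr, ← ENNReal.rpow_mul, ENNReal.ofReal_mul ha_nonneg,
        ENNReal.mul_rpow_of_ne_top ENNReal.ofReal_ne_top ENNReal.ofReal_ne_top]
      ring
    _ ≤ w i * ENNReal.ofReal (a i) ^ (d * r) * (A ^ r * ENNReal.ofReal R ^ (m * r)) := by
      gcongr
      exact ENNReal.one_le_ofReal.2 (ha i)

lemma le_mul_rpow_pow_of_le_tsum_dilation {A : ℝ≥0∞} (hr0 : 0 ≤ r) (hr1 : r ≤ 1) (hd : 0 ≤ d)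
    (ha : ∀ i, 1 ≤ a i) (hA : (∑' i, w i * ENNReal.ofReal (a i) ^ (d * r)) * A ^ r ≤ A)
    (hgrowth : ∀ R, 1 ≤ R → f R ≤ A * ENNReal.ofReal R ^ d)
    (hrec : ∀ R, 1 ≤ R → f R ≤ ∑' i, w i * f (a i * R) ^ r) (j : ℕ) :
    ∀ R, 1 ≤ R → f R ≤ A * ENNReal.ofReal R ^ (d * r ^ j) := by
  induction j with
  | zero => simpa only [pow_zero, mul_one] using hgrowth
  | succ j ih =>
    intro R hR
    have hexp : d * r ^ j ≤ d := mul_le_of_le_one_right hd (pow_le_one₀ hr0 hr1)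
    have hdil (i : ι) : 1 ≤ a i * R := one_le_mul_of_one_le_of_one_le (ha i) hR
    calc
      f R ≤ ∑' i, w i * f (a i * R) ^ r := hrec R hR
      _ ≤ _ := tsum_dilation_le hr0 ha hexp fun i => ih _ (hdil i)
      _ ≤ A * ENNReal.ofReal R ^ (d * r ^ j * r) := by gcongr
      _ = A * ENNReal.ofReal R ^ (d * r ^ (j + 1)) := by rw [mul_assoc, pow_succ]

lemma tendsto_ofReal_rpow_mul_pow {R : ℝ} (hR : 0 < R) (d : ℝ) (hr0 : 0 ≤ r) (hr1 : r < 1) :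
    Tendsto (fun j : ℕ => ENNReal.ofReal R ^ (d * r ^ j)) atTop (𝓝 1) := by
  have hexp : Tendsto (fun j : ℕ => d * r ^ j) atTop (𝓝 0) := by
    simpa only [mul_zero] using (tendsto_pow_atTop_nhds_zero_of_lt_one hr0 hr1).const_mul d
  have hpow : Tendsto (fun j : ℕ => R ^ (d * r ^ j)) atTop (𝓝 1) := by
    simpa only [Real.rpow_zero] using tendsto_const_nhds.rpow hexp (Or.inl hR.ne')
  simpa only [ENNReal.ofReal_rpow_of_pos hR, ENNReal.ofReal_one] using ENNReal.tendsto_ofReal hpow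

lemma le_max_rpow_of_le_tsum_dilation {C : ℝ≥0∞} (hr0 : 0 ≤ r) (hr1 : r < 1) (hd : 0 ≤ d)
    (ha : ∀ i, 1 ≤ a i) (hgrowth : ∀ R, 1 ≤ R → f R ≤ C * ENNReal.ofReal R ^ d)
    (hrec : ∀ R, 1 ≤ R → f R ≤ ∑' i, w i * f (a i * R) ^ r) {R : ℝ} (hR : 1 ≤ R) :
    f R ≤ max C ((∑' i, w i * ENNReal.ofReal (a i) ^ (d * r)) ^ (1 - r)⁻¹) := by
  set A := max C ((∑' i, w i * ENNReal.ofReal (a i) ^ (d * r)) ^ (1 - r)⁻¹)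
  have hA : (∑' i, w i * ENNReal.ofReal (a i) ^ (d * r)) * A ^ r ≤ A :=
    mul_rpow_le_self_of_rpow_inv_le hr0 hr1 (le_max_right _ _)
  have hgrowthA (R : ℝ) (hR : 1 ≤ R) : f R ≤ A * ENNReal.ofReal R ^ d :=
    (hgrowth R hR).trans (by gcongr; exact le_max_left _ _)
  have hlim : Tendsto (fun j : ℕ => A * ENNReal.ofReal R ^ (d * r ^ j)) atTop (𝓝 A) := by
    simpa only [mul_one] using ENNReal.Tendsto.const_mul
      (tendsto_ofReal_rpow_mul_pow (zero_lt_one.trans_le hR) d hr0 hr1) (Or.inl one_ne_zero)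
  exact ge_of_tendsto' hlim fun j =>
    le_mul_rpow_pow_of_le_tsum_dilation hr0 hr1.le hd ha hA hgrowthA hrec j R hR

lemma tsum_ofReal_rpow_mul_rpow_ne_top {x b s : ℝ} (hx : 1 < x) (hsb : s < b) :
    ∑' k : ℕ, ENNReal.ofReal (x ^ (-(k : ℝ) * b)) * ENNReal.ofReal (x ^ (k + 1)) ^ s ≠ ∞ := by
  have hx0 : 0 < x := zero_lt_one.trans hx
  have hterm (k : ℕ) : ENNReal.ofReal (x ^ (-(k : ℝ) * b)) * ENNReal.ofReal (x ^ (k + 1)) ^ s =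
      ENNReal.ofReal (x ^ s * (x ^ (s - b)) ^ k) := by
    rw [ENNReal.ofReal_rpow_of_pos (by positivity), ← ENNReal.ofReal_mul (by positivity),
      ← Real.rpow_natCast, ← Real.rpow_natCast, ← Real.rpow_mul hx0.le, ← Real.rpow_mul hx0.le,
      ← Real.rpow_add hx0, ← Real.rpow_add hx0]
    push_cast
    ring_nf
  have hratio : x ^ (s - b) < 1 := Real.rpow_lt_one_of_one_lt_of_neg hx (sub_neg.2 hsb)
  simp only [hterm]
  exact ((summable_geometric_of_lt_one (by positivity) hratio).mul_left _).tsum_ofReal_ne_top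

theorem abstract_critical_iteration_general {d q b x : ℝ} (hd : 0 ≤ d) (hq : 1 < q)
    (hb : d / q < b) (hx : 1 < x) {S : ℝ → ℝ} (hSnonneg : ∀ R, 1 ≤ R → 0 ≤ S R) {C₀ C₁ : ℝ}
    (hgrowth : ∀ R, 1 ≤ R → S R ≤ C₀ * R ^ d)
    (hrec : ∀ R, 1 ≤ R → ENNReal.ofReal (S R) ≤ ENNReal.ofReal C₁ *
      ∑' k : ℕ, ENNReal.ofReal (x ^ (-(k : ℝ) * b) * S (x ^ (k + 1) * R) ^ (1 / q))) :
    ∃ M, ∀ R, 1 ≤ R → S R ≤ M := by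
  have hr0 : 0 ≤ 1 / q := by positivity
  have hr1 : 1 / q < 1 := (div_lt_one (zero_lt_one.trans hq)).2 hq
  have hdil (k : ℕ) : 1 ≤ x ^ (k + 1) := one_le_pow₀ hx.le
  let w (k : ℕ) := ENNReal.ofReal C₁ * ENNReal.ofReal (x ^ (-(k : ℝ) * b))
  have hgrowth' (R : ℝ) (hR : 1 ≤ R) :
      ENNReal.ofReal (S R) ≤ ENNReal.ofReal C₀ * ENNReal.ofReal R ^ d := by
    rw [ENNReal.ofReal_rpow_of_pos (by positivity), ← ENNReal.ofReal_mul' (by positivity)]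
    exact ENNReal.ofReal_le_ofReal (hgrowth R hR)
  have hrec' (R : ℝ) (hR : 1 ≤ R) : ENNReal.ofReal (S R) ≤
      ∑' k, w k * ENNReal.ofReal (S (x ^ (k + 1) * R)) ^ (1 / q) := by
    have hS (k : ℕ) := hSnonneg _ (one_le_mul_of_one_le_of_one_le (hdil k) hR)
    simpa only [w, mul_assoc, ENNReal.tsum_mul_left, ENNReal.ofReal_rpow_of_nonneg (hS _) hr0,
      ← ENNReal.ofReal_mul (Real.rpow_nonneg (zero_lt_one.trans hx).le _)] using hrec R hR
  have hmoment : ∑' k, w k * ENNReal.ofReal (x ^ (k + 1)) ^ (d * (1 / q)) ≠ ∞ := by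
    simp only [w, mul_assoc, ENNReal.tsum_mul_left]
    exact ENNReal.mul_ne_top ENNReal.ofReal_ne_top
      (tsum_ofReal_rpow_mul_rpow_ne_top hx (by rwa [mul_one_div]))
  have hbound_ne_top := max_ne_top (ENNReal.ofReal_ne_top (r := C₀))
    (ENNReal.rpow_ne_top_of_nonneg (inv_nonneg.2 (sub_nonneg.2 hr1.le)) hmoment)
  exact ⟨_, fun R hR => (ENNReal.ofReal_le_iff_le_toReal hbound_ne_top).1
    (le_max_rpow_of_le_tsum_dilation hr0 hr1 hd hdil hgrowth' hrec' hR)⟩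

end DilationInequality

/-- Abstract critical iteration: if `S : [1,∞) → [0,∞)` is nondecreasing,
`S(R) ≤ C₀ R^n`, and `S(R) ≤ C₁ Σ_{k≥0} 2^{-kb} S(2^{k+1}R)^{1/q}` (series in `ℝ≥0∞`)
with `b > n/q`, then `S` is bounded on `[1,∞)`. -/
theorem abstract_critical_iteration
    (n : ℕ) (hn : 1 ≤ n) (q b : ℝ) (hq : 1 < q) (hb : (n : ℝ) / q < b)
    (S : ℝ → ℝ) (hSnonneg : ∀ R : ℝ, 1 ≤ R → 0 ≤ S R)
    (hSmono : ∀ R R' : ℝ, 1 ≤ R → R ≤ R' → S R ≤ S R')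
    (C₀ C₁ : ℝ) (hC₀ : 0 < C₀) (hC₁ : 0 < C₁)
    (hgrowth : ∀ R : ℝ, 1 ≤ R → S R ≤ C₀ * R ^ (n : ℝ))
    (hrec : ∀ R : ℝ, 1 ≤ R →
      ENNReal.ofReal (S R) ≤
        ENNReal.ofReal C₁ *
          ∑' k : ℕ, ENNReal.ofReal
            ((2 : ℝ) ^ (-(k : ℝ) * b) * (S ((2 : ℝ) ^ (k + 1) * R)) ^ (1 / q))) :
    ∃ M : ℝ, ∀ R : ℝ, 1 ≤ R → S R ≤ M :=
  abstract_critical_iteration_general n.cast_nonneg hq hb one_lt_two hSnonneg hgrowth hrec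
end
end

section
/- (Liouville theorem under an abstract cutoff estimate; Proposition 1.2) Let n ≥ 1, s ∈ (0,1), and assume 1 < q ≤ n/(n−2s) if n > 2s, and 1 < q < ∞ if n ≤ 2s. Let u : ℝⁿ → [0,∞) be measurable with u ∈ L^q_loc(ℝⁿ) ∩ L¹_{2s}(ℝⁿ). Suppose there exist a constant C > 0 and, for each R > 0, a measurable function ψ_R : ℝⁿ → ℝ such that (i) |ψ_R(x)| ≤ C R^{−2s} for |x| < 2R and |ψ_R(x)| ≤ C Rⁿ |x|^{−n−2s} for |x| ≥ 2R, and (ii) ∫_{ℝⁿ} u(x) ψ_R(x) dx ≥ ∫_{ℝⁿ} u(x)^q η_R(x)² dx. Then u = 0 almost everywhere in ℝⁿ. -/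
open MeasureTheory Metric

noncomputable section

/-!
Write `W R = ∫ u ^ q (1 + |x| / R) ^ (-N)` with `N = d + σ`. Testing bounds `∫_{B_R} u ^ q` by the
nonlocal tail `R ^ (-σ) ∫ u (1 + |x| / R) ^ (-N)` up to a constant. Passing from `R` to `2 ^ k R`
costs the tail only a factor `2 ^ (k (N - σ))`, so summing over dyadic balls also bounds `W R` by
the tail at `R`. Conversely, Hölder's inequality bounds the tail by a constant times
`W R ^ (1 / q)`: the power of `R` it leaves behind is `d (1 - 1 / q) - σ`, which is nonpositive
exactly when `d ≤ σ` or `q ≤ d / (d - σ)`. Hence `W` is bounded and `u ∈ L ^ q`. Now split the tail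
at a fixed ball: the inner part vanishes as `R → ∞`, and the outer part is controlled by the small
`L ^ q` norm of `u` outside that ball, which covers the critical exponent. So the tail tends to `0`,
and `∫ u ^ q = 0`.
-/

open Filter
open scoped ENNReal NNReal Topology

section Weight

variable {X : Type*} [PseudoMetricSpace X] {N R T : ℝ} {o x : X}

/-- The weight `(1 + |x - o| / R) ^ (-N)`: a bounded profile at scale `R` with decay of order `N`,
valued in `ℝ≥0∞` so that it can be integrated without integrability conditions. -/
def decayWeight (N : ℝ) (o : X) (R : ℝ) (x : X) : ℝ≥0∞ :=
  .ofReal ((1 + dist x o / R) ^ (-N))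

/-- The constant `2 ^ N / (1 - 2 ^ (a - N))` arising when a weight of decay `N` is integrated over
dyadic balls carrying mass of order `R ^ a`. -/
def dyadicConst (N a : ℝ) : ℝ≥0∞ :=
  .ofReal (2 ^ N) * (1 - .ofReal (2 ^ (a - N)))⁻¹

lemma dyadicConst_ne_top {a : ℝ} (ha : a < N) : dyadicConst N a ≠ ∞ := by
  have hratio : ENNReal.ofReal ((2 : ℝ) ^ (a - N)) < 1 :=
    ENNReal.ofReal_lt_one.2 (Real.rpow_lt_one_of_one_lt_of_neg one_lt_two (sub_neg.2 ha))
  exact ENNReal.mul_ne_top ENNReal.ofReal_ne_top (ENNReal.inv_ne_top.2 (tsub_pos_of_lt hratio).ne')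

@[fun_prop]
lemma measurable_decayWeight [MeasurableSpace X] [OpensMeasurableSpace X] (N : ℝ) (o : X) (R : ℝ) :
    Measurable (decayWeight N o R) := by
  have hdist : Measurable fun x : X ↦ dist x o := (continuous_id.dist continuous_const).measurable
  unfold decayWeight
  fun_prop

lemma decayWeight_le_one (hN : 0 ≤ N) (hR : 0 ≤ R) : decayWeight N o R x ≤ 1 := by
  have hbase : 1 ≤ 1 + dist x o / R := le_add_of_nonneg_right (by positivity)
  exact ENNReal.ofReal_le_one.2 (Real.rpow_le_one_of_one_le_of_nonpos hbase (neg_nonpos.2 hN))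

lemma ofReal_rpow_neg_le_decayWeight {t : ℝ} (hN : 0 ≤ N) (hR : 0 ≤ R)
    (ht : 1 + dist x o / R ≤ T * t) (hT : 0 < T) :
    ENNReal.ofReal (t ^ (-N)) ≤ ENNReal.ofReal (T ^ N) * decayWeight N o R x := by
  have hbase : 0 < 1 + dist x o / R := by positivity
  have ht0 : 0 < t := pos_of_mul_pos_right (hbase.trans_le ht) hT.le
  rw [decayWeight, ← ENNReal.ofReal_mul (by positivity)]
  refine ENNReal.ofReal_le_ofReal ?_
  calc t ^ (-N) = T ^ N * (T * t) ^ (-N) := by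
        rw [Real.mul_rpow hT.le ht0.le, ← mul_assoc, ← Real.rpow_add hT, add_neg_cancel,
          Real.rpow_zero, one_mul]
    _ ≤ T ^ N * (1 + dist x o / R) ^ (-N) := by
        gcongr T ^ N * ?_
        exact Real.rpow_le_rpow_of_nonpos hbase ht (neg_nonpos.2 hN)

lemma decayWeight_mul_le (hN : 0 ≤ N) (hR : 0 < R) (hT : 1 ≤ T) :
    decayWeight N o (T * R) x ≤ ENNReal.ofReal (T ^ N) * decayWeight N o R x := by
  have hT0 : 0 < T := one_pos.trans_le hT
  refine ofReal_rpow_neg_le_decayWeight hN hR.le ?_ hT0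
  calc 1 + dist x o / R ≤ T + dist x o / R := by gcongr
    _ = T * (1 + dist x o / (T * R)) := by field_simp

lemma decayWeight_le_tsum_indicator_ball (hN : 0 ≤ N) (hR : 0 < R) :
    decayWeight N o R x ≤ ENNReal.ofReal (2 ^ N) *
      ∑' k : ℕ, (ball o (2 ^ k * R)).indicator (fun _ ↦ ENNReal.ofReal ((2 ^ k) ^ (-N))) x := by
  obtain ⟨k, hk, hk'⟩ : ∃ k : ℕ, (2 : ℝ) ^ k ≤ 1 + dist x o / R ∧ 1 + dist x o / R < 2 ^ (k + 1) :=
    exists_nat_pow_near (le_add_of_nonneg_right (by positivity)) one_lt_two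
  have hx : x ∈ ball o (2 ^ (k + 1) * R) := by
    rw [mem_ball, ← div_lt_iff₀ hR]
    linarith
  calc decayWeight N o R x ≤ ENNReal.ofReal ((2 ^ k) ^ (-N)) :=
        ENNReal.ofReal_le_ofReal
          (Real.rpow_le_rpow_of_nonpos (by positivity) hk (neg_nonpos.2 hN))
    _ = ENNReal.ofReal (2 ^ N) * ENNReal.ofReal ((2 ^ (k + 1)) ^ (-N)) := by
        rw [← ENNReal.ofReal_mul (by positivity), pow_succ',
          Real.mul_rpow (by positivity) (by positivity), ← mul_assoc, ← Real.rpow_add two_pos,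
          add_neg_cancel, Real.rpow_zero, one_mul]
    _ ≤ _ := by
        gcongr
        rw [← Set.indicator_of_mem hx fun _ ↦ ENNReal.ofReal ((2 ^ (k + 1)) ^ (-N))]
        exact ENNReal.le_tsum (k + 1)

variable [MeasurableSpace X] [OpensMeasurableSpace X] {μ : Measure X}

lemma lintegral_mul_decayWeight_le {f : X → ℝ≥0∞} {M : ℝ≥0∞} {a : ℝ} (hf : AEMeasurable f μ)
    (hN : 0 ≤ N) (hR : 0 < R)
    (hM : ∀ T, 1 ≤ T → ∫⁻ x in ball o (T * R), f x ∂μ ≤ ENNReal.ofReal (T ^ a) * M) :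
    ∫⁻ x, f x * decayWeight N o R x ∂μ ≤ dyadicConst N a * M := by
  let c (k : ℕ) : ℝ≥0∞ := ENNReal.ofReal ((2 ^ k) ^ (-N))
  have hdyadic (k : ℕ) : c k * ∫⁻ x in ball o (2 ^ k * R), f x ∂μ ≤
      ENNReal.ofReal (2 ^ (a - N)) ^ k * M := by
    calc _ ≤ c k * (ENNReal.ofReal ((2 ^ k) ^ a) * M) := by
          gcongr
          exact hM _ (one_le_pow₀ one_le_two)
      _ = ENNReal.ofReal (2 ^ (a - N)) ^ k * M := by
          rw [← mul_assoc, ← ENNReal.ofReal_mul (by positivity), ← Real.rpow_add (by positivity),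
            ← ENNReal.ofReal_pow (by positivity), ← Real.rpow_natCast, ← Real.rpow_natCast,
            ← Real.rpow_mul two_pos.le, ← Real.rpow_mul two_pos.le, neg_add_eq_sub,
            mul_comm (k : ℝ)]
  calc ∫⁻ x, f x * decayWeight N o R x ∂μ
      ≤ ∫⁻ x, ENNReal.ofReal (2 ^ N) *
          ∑' k : ℕ, (ball o (2 ^ k * R)).indicator (fun x ↦ c k * f x) x ∂μ := by
        refine lintegral_mono fun x ↦ ?_
        calc f x * decayWeight N o R x ≤ f x * (ENNReal.ofReal (2 ^ N) *
              ∑' k : ℕ, (ball o (2 ^ k * R)).indicator (fun _ ↦ c k) x) := by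
              gcongr
              exact decayWeight_le_tsum_indicator_ball hN hR
          _ = _ := by
              simp_rw [Set.indicator_mul_left, ENNReal.tsum_mul_right]
              ring
    _ = ENNReal.ofReal (2 ^ N) * ∑' k : ℕ, c k * ∫⁻ x in ball o (2 ^ k * R), f x ∂μ := by
        have hmeas (k : ℕ) : AEMeasurable ((ball o (2 ^ k * R)).indicator fun x ↦ c k * f x) μ :=
          (hf.const_mul _).indicator measurableSet_ball
        rw [lintegral_const_mul'' _ (.tsum hmeas), lintegral_tsum hmeas]
        simp_rw [lintegral_indicator measurableSet_ball, lintegral_const_mul'' _ hf.restrict]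
    _ ≤ ENNReal.ofReal (2 ^ N) * ∑' k : ℕ, ENNReal.ofReal (2 ^ (a - N)) ^ k * M := by
        gcongr _ * ?_
        exact ENNReal.tsum_le_tsum hdyadic
    _ = dyadicConst N a * M := by
        rw [ENNReal.tsum_mul_right, ENNReal.tsum_geometric, dyadicConst, mul_assoc]

end Weight

lemma le_rpow_inv_of_le_mul_rpow {a c : ℝ≥0∞} {θ : ℝ} (ha : a ≠ ∞) (hθ : θ < 1)
    (h : a ≤ c * a ^ θ) : a ≤ c ^ (1 - θ)⁻¹ := by
  rcases eq_or_ne a 0 with rfl | ha₀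
  · exact zero_le
  rw [ENNReal.le_rpow_inv_iff (sub_pos.2 hθ), ENNReal.rpow_sub _ _ ha₀ ha, ENNReal.rpow_one]
  exact ENNReal.div_le_of_le_mul h

section LIntegral

variable {α : Type*} [MeasurableSpace α] {μ : Measure α} {q : ℝ} {U w : α → ℝ≥0∞}

lemma lintegral_mul_le_rpow_mul_rpow (hU : AEMeasurable U μ) (hw : AEMeasurable w μ) (hq : 1 ≤ q) :
    ∫⁻ x, U x * w x ∂μ ≤ (∫⁻ x, U x ^ q * w x ∂μ) ^ q⁻¹ * (∫⁻ x, w x ∂μ) ^ (1 - q⁻¹) := by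
  have hq₀ : 0 < q := one_pos.trans_le hq
  have hq₁ : 0 ≤ 1 - q⁻¹ := sub_nonneg.2 (inv_le_one_of_one_le₀ hq)
  have hsplit (x : α) : U x * w x = (U x ^ q * w x) ^ q⁻¹ * w x ^ (1 - q⁻¹) := by
    rw [ENNReal.mul_rpow_of_nonneg _ _ (inv_nonneg.2 hq₀.le), ENNReal.rpow_rpow_inv hq₀.ne',
      mul_assoc, ← ENNReal.rpow_add_of_nonneg _ _ (inv_nonneg.2 hq₀.le) hq₁, add_sub_cancel,
      ENNReal.rpow_one]
  simp_rw [hsplit]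
  exact ENNReal.lintegral_mul_norm_pow_le ((hU.pow_const q).mul hw) hw (inv_nonneg.2 hq₀.le) hq₁
    (add_sub_cancel _ _)

lemma lintegral_ne_top_of_rpow [IsFiniteMeasure μ] (hq : 1 ≤ q) (hU : ∫⁻ x, U x ^ q ∂μ ≠ ∞) :
    ∫⁻ x, U x ∂μ ≠ ∞ := by
  have hle (x : α) : U x ≤ 1 + U x ^ q := by
    rcases le_total (U x) 1 with h | h
    · exact h.trans le_self_add
    · calc U x = U x ^ (1 : ℝ) := (ENNReal.rpow_one _).symm
        _ ≤ U x ^ q := ENNReal.rpow_le_rpow_of_exponent_le h hq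
        _ ≤ 1 + U x ^ q := le_add_self
  refine ne_top_of_le_ne_top ?_ (lintegral_mono hle)
  rw [lintegral_add_left measurable_const, lintegral_one]
  exact ENNReal.add_ne_top.2 ⟨measure_ne_top μ _, hU⟩

variable [PseudoMetricSpace α] [OpensMeasurableSpace α]

lemma tendsto_setLIntegral_ball_atTop (o : α) (hU : AEMeasurable U μ) :
    Tendsto (fun r : ℝ ↦ ∫⁻ x in ball o r, U x ∂μ) atTop (𝓝 (∫⁻ x, U x ∂μ)) :=
  (aecover_ball tendsto_id).lintegral_tendsto_of_countably_generated hU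

lemma tendsto_setLIntegral_compl_ball_atTop (o : α) (hU : AEMeasurable U μ)
    (hfin : ∫⁻ x, U x ∂μ ≠ ∞) :
    Tendsto (fun r : ℝ ↦ ∫⁻ x in (ball o r)ᶜ, U x ∂μ) atTop (𝓝 0) := by
  have hball (r : ℝ) : ∫⁻ x in ball o r, U x ∂μ ≠ ∞ :=
    ne_top_of_le_ne_top hfin (setLIntegral_le_lintegral _ _)
  simp_rw [setLIntegral_compl measurableSet_ball (hball _)]
  simpa only [tsub_self] using
    ENNReal.Tendsto.sub tendsto_const_nhds (tendsto_setLIntegral_ball_atTop o hU) (.inl hfin)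

end LIntegral

section NonlocalTail

variable {X : Type*} [PseudoMetricSpace X] [MeasurableSpace X] {μ : Measure X} {o : X}
  {N R T d q σ : ℝ} {V : ℝ≥0} {A : ℝ≥0∞} {U : X → ℝ≥0∞}

/-- Balls centred at `o` of radius `R ≥ 1` have measure at most `V * R ^ d`. -/
def VolumeGrowthLE (μ : Measure X) (o : X) (d : ℝ) (V : ℝ≥0) : Prop :=
  ∀ R, 1 ≤ R → μ (ball o R) ≤ ENNReal.ofReal (R ^ d) * V

/-- The nonlocal tail `R ^ (-σ) ∫ U(x) (1 + |x - o| / R) ^ (-N) dμ(x)`, which controls a function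
tested against the image of a cutoff at scale `R` under an operator of order `σ`. -/
def nonlocalTail (μ : Measure X) (o : X) (N σ R : ℝ) (U : X → ℝ≥0∞) : ℝ≥0∞ :=
  .ofReal (R ^ (-σ)) * ∫⁻ x, U x * decayWeight N o R x ∂μ

lemma VolumeGrowthLE.restrict (hV : VolumeGrowthLE μ o d V) (S : Set X) :
    VolumeGrowthLE (μ.restrict S) o d V :=
  fun R hR ↦ (Measure.restrict_apply_le _ _).trans (hV R hR)

lemma VolumeGrowthLE.measure_ball_lt_top (hV : VolumeGrowthLE μ o d V) (r : ℝ) :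
    μ (ball o r) < ∞ :=
  calc μ (ball o r) ≤ μ (ball o (max 1 r)) := by gcongr; exact le_max_right 1 r
    _ ≤ ENNReal.ofReal (max 1 r ^ d) * V := hV _ (le_max_left 1 r)
    _ < ∞ := ENNReal.mul_lt_top ENNReal.ofReal_lt_top ENNReal.coe_lt_top

lemma nonlocalTail_le_setLIntegral (hN : 0 ≤ N) (hR : 0 ≤ R) :
    nonlocalTail μ o N σ R U ≤ ENNReal.ofReal (R ^ (-σ)) * ∫⁻ x, U x ∂μ := by
  unfold nonlocalTail
  gcongr with x
  exact mul_le_of_le_one_right' (decayWeight_le_one hN hR)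

lemma nonlocalTail_restrict_add_compl {S : Set X} (hS : MeasurableSet S) :
    nonlocalTail (μ.restrict S) o N σ R U + nonlocalTail (μ.restrict Sᶜ) o N σ R U =
      nonlocalTail μ o N σ R U := by
  simp only [nonlocalTail, ← mul_add, lintegral_add_compl _ hS]

variable [OpensMeasurableSpace X]

lemma nonlocalTail_mul_le (hU : AEMeasurable U μ) (hN : 0 ≤ N) (hR : 0 < R) (hT : 1 ≤ T) :
    nonlocalTail μ o N σ (T * R) U ≤ ENNReal.ofReal (T ^ (N - σ)) * nonlocalTail μ o N σ R U := by
  have hT₀ : 0 < T := one_pos.trans_le hT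
  calc nonlocalTail μ o N σ (T * R) U
      ≤ ENNReal.ofReal ((T * R) ^ (-σ)) *
          ∫⁻ x, ENNReal.ofReal (T ^ N) * (U x * decayWeight N o R x) ∂μ := by
        refine mul_le_mul_right (lintegral_mono fun x ↦ ?_) _
        rw [mul_left_comm]
        gcongr
        exact decayWeight_mul_le hN hR hT
    _ = ENNReal.ofReal (T ^ (N - σ)) * nonlocalTail μ o N σ R U := by
        rw [lintegral_const_mul'' _ (by fun_prop), nonlocalTail, Real.mul_rpow hT₀.le hR.le,
          sub_eq_add_neg, Real.rpow_add hT₀, ENNReal.ofReal_mul (by positivity),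
          ENNReal.ofReal_mul (by positivity)]
        ring

lemma nonlocalTail_ne_top (hU : AEMeasurable U μ) (hN : 0 ≤ N)
    (h : nonlocalTail μ o N σ 1 U ≠ ∞) (hR : 1 ≤ R) : nonlocalTail μ o N σ R U ≠ ∞ := by
  have hscale := nonlocalTail_mul_le (σ := σ) (o := o) hU hN one_pos hR
  rw [mul_one] at hscale
  exact ne_top_of_le_ne_top (ENNReal.mul_ne_top ENNReal.ofReal_ne_top h) hscale

lemma VolumeGrowthLE.lintegral_decayWeight_le (hV : VolumeGrowthLE μ o d V) (hN : 0 ≤ N)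
    (hR : 1 ≤ R) :
    ∫⁻ x, decayWeight N o R x ∂μ ≤ dyadicConst N d * (ENNReal.ofReal (R ^ d) * V) := by
  have hR₀ : 0 < R := one_pos.trans_le hR
  have hgrowth (T : ℝ) (hT : 1 ≤ T) : ∫⁻ _ in ball o (T * R), 1 ∂μ ≤
      ENNReal.ofReal (T ^ d) * (ENNReal.ofReal (R ^ d) * V) := by
    rw [setLIntegral_one, ← mul_assoc, ← ENNReal.ofReal_mul (by positivity),
      ← Real.mul_rpow (by positivity) hR₀.le]
    exact hV _ (one_le_mul_of_one_le_of_one_le hT hR)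
  simpa only [one_mul] using lintegral_mul_decayWeight_le aemeasurable_const hN hR₀ hgrowth

/-- Hölder's inequality; `hcrit` makes the power of `R` it produces nonpositive. -/
lemma VolumeGrowthLE.nonlocalTail_le (hV : VolumeGrowthLE μ o d V) (hU : AEMeasurable U μ)
    (hN : 0 ≤ N) (hq : 1 ≤ q) (hcrit : d * (1 - q⁻¹) ≤ σ) (hR : 1 ≤ R) :
    nonlocalTail μ o N σ R U ≤ (dyadicConst N d * V) ^ (1 - q⁻¹) *
      (∫⁻ x, U x ^ q * decayWeight N o R x ∂μ) ^ q⁻¹ := by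
  have hR₀ : 0 < R := one_pos.trans_le hR
  have hθ : 0 ≤ 1 - q⁻¹ := sub_nonneg.2 (inv_le_one_of_one_le₀ hq)
  have hscale : ENNReal.ofReal (R ^ (-σ)) * ENNReal.ofReal (R ^ d) ^ (1 - q⁻¹) ≤ 1 := by
    rw [ENNReal.ofReal_rpow_of_pos (by positivity), ← Real.rpow_mul hR₀.le,
      ← ENNReal.ofReal_mul (by positivity), ← Real.rpow_add hR₀, ENNReal.ofReal_le_one]
    exact Real.rpow_le_one_of_one_le_of_nonpos hR (by linarith)
  set W := (∫⁻ x, U x ^ q * decayWeight N o R x ∂μ) ^ q⁻¹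
  calc nonlocalTail μ o N σ R U
      ≤ ENNReal.ofReal (R ^ (-σ)) * (W * (∫⁻ x, decayWeight N o R x ∂μ) ^ (1 - q⁻¹)) := by
        unfold nonlocalTail
        gcongr
        exact lintegral_mul_le_rpow_mul_rpow hU (by fun_prop) hq
    _ ≤ ENNReal.ofReal (R ^ (-σ)) *
          (W * (ENNReal.ofReal (R ^ d) * (dyadicConst N d * V)) ^ (1 - q⁻¹)) := by
        gcongr
        rw [mul_left_comm]
        exact hV.lintegral_decayWeight_le hN hR
    _ = ENNReal.ofReal (R ^ (-σ)) * ENNReal.ofReal (R ^ d) ^ (1 - q⁻¹) *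
          ((dyadicConst N d * V) ^ (1 - q⁻¹) * W) := by
        rw [ENNReal.mul_rpow_of_nonneg _ _ hθ]
        ring
    _ ≤ (dyadicConst N d * V) ^ (1 - q⁻¹) * W := mul_le_of_le_one_left' hscale

lemma VolumeGrowthLE.nonlocalTail_le_near_add_far (hV : VolumeGrowthLE μ o d V)
    (hU : AEMeasurable U μ) (hN : 0 ≤ N) (hq : 1 ≤ q) (hcrit : d * (1 - q⁻¹) ≤ σ) (hR : 1 ≤ R)
    (r : ℝ) :
    nonlocalTail μ o N σ R U ≤ ENNReal.ofReal (R ^ (-σ)) * ∫⁻ x in ball o r, U x ∂μ +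
      (dyadicConst N d * V) ^ (1 - q⁻¹) * (∫⁻ x in (ball o r)ᶜ, U x ^ q ∂μ) ^ q⁻¹ := by
  have hR₀ : 0 ≤ R := zero_le_one.trans hR
  rw [← nonlocalTail_restrict_add_compl (measurableSet_ball (x := o) (ε := r))]
  gcongr
  · exact nonlocalTail_le_setLIntegral hN hR₀
  · refine ((hV.restrict _).nonlocalTail_le hU.restrict hN hq hcrit hR).trans ?_
    gcongr with x
    exact mul_le_of_le_one_right' (decayWeight_le_one hN hR₀)

lemma VolumeGrowthLE.tendsto_nonlocalTail (hV : VolumeGrowthLE μ o d V) (hU : AEMeasurable U μ)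
    (hN : 0 ≤ N) (hdN : d < N) (hq : 1 ≤ q) (hσ : 0 < σ) (hcrit : d * (1 - q⁻¹) ≤ σ)
    (hfin : ∫⁻ x, U x ^ q ∂μ ≠ ∞) :
    Tendsto (fun R ↦ nonlocalTail μ o N σ R U) atTop (𝓝 0) := by
  let far (r : ℝ) : ℝ≥0∞ :=
    (dyadicConst N d * V) ^ (1 - q⁻¹) * (∫⁻ x in (ball o r)ᶜ, U x ^ q ∂μ) ^ q⁻¹
  have hfar : Tendsto far atTop (𝓝 0) := by
    have hD : (dyadicConst N d * V) ^ (1 - q⁻¹) ≠ ∞ :=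
      ENNReal.rpow_ne_top_of_nonneg (sub_nonneg.2 (inv_le_one_of_one_le₀ hq))
        (ENNReal.mul_ne_top (dyadicConst_ne_top hdN) ENNReal.coe_ne_top)
    have h := (tendsto_setLIntegral_compl_ball_atTop o (hU.pow_const q) hfin).ennrpow_const q⁻¹
    rw [ENNReal.zero_rpow_of_pos (inv_pos.2 (one_pos.trans_le hq))] at h
    simpa only [mul_zero] using ENNReal.Tendsto.const_mul h (.inr hD)
  refine tendsto_order.2 ⟨fun _ h ↦ absurd h not_lt_zero, fun ε hε ↦ ?_⟩
  obtain ⟨r, hr⟩ := (hfar.eventually_lt_const hε).exists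
  have : IsFiniteMeasure (μ.restrict (ball o r)) :=
    isFiniteMeasure_restrict.2 (hV.measure_ball_lt_top r).ne
  have hnear_fin : ∫⁻ x in ball o r, U x ∂μ ≠ ∞ :=
    lintegral_ne_top_of_rpow hq (ne_top_of_le_ne_top hfin (setLIntegral_le_lintegral _ _))
  have hpow : Tendsto (fun R : ℝ ↦ ENNReal.ofReal (R ^ (-σ))) atTop (𝓝 0) := by
    simpa only [ENNReal.ofReal_zero] using ENNReal.tendsto_ofReal (tendsto_rpow_neg_atTop hσ)
  have hbound := (ENNReal.Tendsto.mul_const hpow (.inr hnear_fin)).add_const (far r)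
  rw [zero_mul, zero_add] at hbound
  filter_upwards [hbound.eventually_lt_const hr, eventually_ge_atTop 1] with R hlt hR
  exact (hV.nonlocalTail_le_near_add_far hU hN hq hcrit hR r).trans_lt hlt

lemma lintegral_rpow_mul_decayWeight_le (hU : AEMeasurable U μ) (hN : 0 ≤ N)
    (henergy : ∀ R, 1 ≤ R → ∫⁻ x in ball o R, U x ^ q ∂μ ≤ A * nonlocalTail μ o N σ R U)
    (hR : 1 ≤ R) :
    ∫⁻ x, U x ^ q * decayWeight N o R x ∂μ ≤
      dyadicConst N (N - σ) * A * nonlocalTail μ o N σ R U := by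
  have hR₀ : 0 < R := one_pos.trans_le hR
  rw [mul_assoc]
  refine lintegral_mul_decayWeight_le (hU.pow_const q) hN hR₀ fun T hT ↦ ?_
  calc ∫⁻ x in ball o (T * R), U x ^ q ∂μ ≤ A * nonlocalTail μ o N σ (T * R) U :=
        henergy _ (one_le_mul_of_one_le_of_one_le hT hR)
    _ ≤ A * (ENNReal.ofReal (T ^ (N - σ)) * nonlocalTail μ o N σ R U) := by
        gcongr
        exact nonlocalTail_mul_le hU hN hR₀ hT
    _ = ENNReal.ofReal (T ^ (N - σ)) * (A * nonlocalTail μ o N σ R U) := mul_left_comm _ _ _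

/-- The weighted energy is at most its own power `q⁻¹ < 1`, times a constant, hence bounded. -/
lemma VolumeGrowthLE.lintegral_rpow_ne_top (hV : VolumeGrowthLE μ o d V) (hU : AEMeasurable U μ)
    (hN : 0 ≤ N) (hdN : d < N) (hq : 1 < q) (hσ : 0 < σ) (hcrit : d * (1 - q⁻¹) ≤ σ)
    (hA : A ≠ ∞) (htail : nonlocalTail μ o N σ 1 U ≠ ∞)
    (henergy : ∀ R, 1 ≤ R → ∫⁻ x in ball o R, U x ^ q ∂μ ≤ A * nonlocalTail μ o N σ R U) :
    ∫⁻ x, U x ^ q ∂μ ≠ ∞ := by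
  have hq₀ : 0 ≤ q⁻¹ := inv_nonneg.2 (zero_le_one.trans hq.le)
  have hq₁ : q⁻¹ < 1 := inv_lt_one_of_one_lt₀ hq
  set K := dyadicConst N (N - σ) * A
  set D := (dyadicConst N d * V) ^ (1 - q⁻¹)
  have hK : K ≠ ∞ := ENNReal.mul_ne_top (dyadicConst_ne_top (sub_lt_self N hσ)) hA
  have hD : D ≠ ∞ := ENNReal.rpow_ne_top_of_nonneg (sub_nonneg.2 hq₁.le)
    (ENNReal.mul_ne_top (dyadicConst_ne_top hdN) ENNReal.coe_ne_top)
  have hweighted (R : ℝ) (hR : 1 ≤ R) :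
      ∫⁻ x, U x ^ q * decayWeight N o R x ∂μ ≤ (K * D) ^ (1 - q⁻¹)⁻¹ := by
    have hself := lintegral_rpow_mul_decayWeight_le hU hN henergy hR
    refine le_rpow_inv_of_le_mul_rpow ?_ hq₁ (hself.trans ?_)
    · exact ne_top_of_le_ne_top (ENNReal.mul_ne_top hK (nonlocalTail_ne_top hU hN htail hR)) hself
    · rw [mul_assoc K]
      gcongr
      exact hV.nonlocalTail_le hU hN hq.le hcrit hR
  have hball (R : ℝ) (hR : 1 ≤ R) :
      ∫⁻ x in ball o R, U x ^ q ∂μ ≤ A * (D * ((K * D) ^ (1 - q⁻¹)⁻¹) ^ q⁻¹) :=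
    (henergy R hR).trans <| by
      gcongr
      refine (hV.nonlocalTail_le hU hN hq.le hcrit hR).trans ?_
      gcongr
      exact hweighted R hR
  refine ne_top_of_le_ne_top ?_ (le_of_tendsto (tendsto_setLIntegral_ball_atTop o (hU.pow_const q))
    ((eventually_ge_atTop 1).mono hball))
  have hKD : (K * D) ^ (1 - q⁻¹)⁻¹ ≠ ∞ :=
    ENNReal.rpow_ne_top_of_nonneg (inv_nonneg.2 (sub_nonneg.2 hq₁.le)) (ENNReal.mul_ne_top hK hD)
  exact ENNReal.mul_ne_top hA (ENNReal.mul_ne_top hD (ENNReal.rpow_ne_top_of_nonneg hq₀ hKD))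

theorem VolumeGrowthLE.ae_eq_zero_of_setLIntegral_rpow_le_nonlocalTail
    (hV : VolumeGrowthLE μ o d V) (hU : AEMeasurable U μ)
    (hN : 0 ≤ N) (hdN : d < N) (hq : 1 < q) (hσ : 0 < σ) (hcrit : d * (1 - q⁻¹) ≤ σ)
    (hA : A ≠ ∞) (htail : nonlocalTail μ o N σ 1 U ≠ ∞)
    (henergy : ∀ R, 1 ≤ R → ∫⁻ x in ball o R, U x ^ q ∂μ ≤ A * nonlocalTail μ o N σ R U) :
    U =ᵐ[μ] 0 := by
  have hfin := hV.lintegral_rpow_ne_top hU hN hdN hq hσ hcrit hA htail henergy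
  have hvanish : Tendsto (fun R ↦ A * nonlocalTail μ o N σ R U) atTop (𝓝 0) := by
    simpa only [mul_zero] using ENNReal.Tendsto.const_mul
      (hV.tendsto_nonlocalTail hU hN hdN hq.le hσ hcrit hfin) (.inr hA)
  have hzero : ∫⁻ x, U x ^ q ∂μ = 0 := le_zero_iff.1 <|
    le_of_tendsto_of_tendsto (tendsto_setLIntegral_ball_atTop o (hU.pow_const q)) hvanish
      ((eventually_ge_atTop 1).mono henergy)
  filter_upwards [(lintegral_eq_zero_iff' (hU.pow_const q)).1 hzero] with x hx
  exact (ENNReal.rpow_eq_zero_iff_of_pos (one_pos.trans hq)).1 hx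

end NonlocalTail

section CutoffDecay

variable {X : Type*} [PseudoMetricSpace X] [MeasurableSpace X] {μ : Measure X} {o : X}
  {C R d σ : ℝ} {ψ : X → ℝ}

/-- The pointwise bounds on the image of a cutoff at scale `R` around `o` under an operator of
order `σ` on a `d`-dimensional space. Measurability is included because `∫ u ψ` takes the junk
value `0` when `u ψ` is not measurable. -/
structure HasCutoffDecay (μ : Measure X) (o : X) (d σ C R : ℝ) (ψ : X → ℝ) : Prop where
  aestronglyMeasurable : AEStronglyMeasurable ψ μ
  near : ∀ x, dist x o < 2 * R → |ψ x| ≤ C * R ^ (-σ)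
  far : ∀ x, 2 * R ≤ dist x o → |ψ x| ≤ C * R ^ d * dist x o ^ (-d - σ)

lemma HasCutoffDecay.enorm_le (h : HasCutoffDecay μ o d σ C R ψ) (hN : 0 ≤ d + σ) (hR : 0 < R)
    (x : X) :
    ‖ψ x‖ₑ ≤ .ofReal (C * 3 ^ (d + σ)) * (.ofReal (R ^ (-σ)) * decayWeight (d + σ) o R x) := by
  have hC : 0 ≤ C := by
    have hψo := (abs_nonneg _).trans (h.near o (by rw [dist_self]; positivity))
    exact nonneg_of_mul_nonneg_left hψo (by positivity)
  have hweight {t : ℝ} (ht : 1 + dist x o / R ≤ 3 * t)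
      (hψ : |ψ x| ≤ C * R ^ (-σ) * t ^ (-(d + σ))) :
      ‖ψ x‖ₑ ≤ .ofReal (C * 3 ^ (d + σ)) * (.ofReal (R ^ (-σ)) * decayWeight (d + σ) o R x) := by
    calc ‖ψ x‖ₑ = ENNReal.ofReal |ψ x| := (ofReal_norm (ψ x)).symm
      _ ≤ ENNReal.ofReal (C * R ^ (-σ)) * ENNReal.ofReal (t ^ (-(d + σ))) := by
        rw [← ENNReal.ofReal_mul (by positivity)]
        exact ENNReal.ofReal_le_ofReal hψ
      _ ≤ ENNReal.ofReal (C * R ^ (-σ)) *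
            (ENNReal.ofReal (3 ^ (d + σ)) * decayWeight (d + σ) o R x) := by
        gcongr
        exact ofReal_rpow_neg_le_decayWeight hN hR.le ht three_pos
      _ = _ := by
        rw [ENNReal.ofReal_mul hC, ENNReal.ofReal_mul hC]
        ring
  rcases lt_or_ge (dist x o) (2 * R) with hx | hx
  · have hdist : dist x o / R < 2 := (div_lt_iff₀ hR).2 hx
    refine hweight (t := 1) (by linarith) ?_
    simpa only [Real.one_rpow, mul_one] using h.near x hx
  · have hdist : 2 ≤ dist x o / R := (le_div_iff₀ hR).2 hx
    refine hweight (t := dist x o / R) (by linarith) ((h.far x hx).trans_eq ?_)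
    have hscale : R ^ (-σ) = R ^ d * R ^ (-(d + σ)) := by
      rw [← Real.rpow_add hR]
      congr 1
      ring
    rw [Real.div_rpow dist_nonneg hR.le, hscale, ← neg_add']
    field_simp

lemma HasCutoffDecay.ofReal_integral_mul_le [OpensMeasurableSpace X]
    (h : HasCutoffDecay μ o d σ C R ψ) {u : X → ℝ} (hu : AEStronglyMeasurable u μ)
    (hN : 0 ≤ d + σ) (hR : 0 < R) :
    ENNReal.ofReal (∫ x, u x * ψ x ∂μ) ≤
      .ofReal (C * 3 ^ (d + σ)) * nonlocalTail μ o (d + σ) σ R (‖u ·‖ₑ) := by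
  calc ENNReal.ofReal (∫ x, u x * ψ x ∂μ) ≤ ‖∫ x, u x * ψ x ∂μ‖ₑ := Real.ofReal_le_enorm _
    _ ≤ ∫⁻ x, ‖u x * ψ x‖ₑ ∂μ := enorm_integral_le_lintegral_enorm _
    _ ≤ ∫⁻ x, .ofReal (C * 3 ^ (d + σ)) *
          (.ofReal (R ^ (-σ)) * (‖u x‖ₑ * decayWeight (d + σ) o R x)) ∂μ := by
        refine lintegral_mono fun x ↦ ?_
        calc ‖u x * ψ x‖ₑ ≤ ‖u x‖ₑ * (.ofReal (C * 3 ^ (d + σ)) *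
              (.ofReal (R ^ (-σ)) * decayWeight (d + σ) o R x)) := by
              rw [enorm_mul]
              gcongr
              exact h.enorm_le hN hR x
          _ = _ := by ring
    _ = .ofReal (C * 3 ^ (d + σ)) * nonlocalTail μ o (d + σ) σ R (‖u ·‖ₑ) := by
        have hw : AEMeasurable (fun x ↦ ‖u x‖ₑ * decayWeight (d + σ) o R x) μ :=
          hu.enorm.mul (by fun_prop)
        rw [lintegral_const_mul'' _ (hw.const_mul _), lintegral_const_mul'' _ hw, nonlocalTail]

end CutoffDecay

lemma mul_one_sub_inv_le_of_le_div_sub {d σ q : ℝ} (hσ : 0 ≤ σ) (hq : 1 ≤ q)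
    (h : σ < d → q ≤ d / (d - σ)) : d * (1 - q⁻¹) ≤ σ := by
  have hq₀ : 0 < q := one_pos.trans_le hq
  rcases lt_or_ge σ d with hσd | hdσ
  · have hle : q * (d - σ) ≤ d := (le_div_iff₀ (sub_pos.2 hσd)).1 (h hσd)
    have hle' : d - σ ≤ d * q⁻¹ := by rwa [← div_eq_mul_inv, le_div_iff₀' hq₀]
    linarith
  · calc d * (1 - q⁻¹) ≤ σ * (1 - q⁻¹) :=
          mul_le_mul_of_nonneg_right hdσ (sub_nonneg.2 (inv_le_one_of_one_le₀ hq))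
      _ ≤ σ := mul_le_of_le_one_right hσ (sub_le_self _ (inv_nonneg.2 hq₀.le))

theorem liouville_abstract_cutoff_general {X : Type*} [PseudoMetricSpace X] [MeasurableSpace X]
    [OpensMeasurableSpace X] {μ : Measure X} {o : X} {d σ q C : ℝ} {V : ℝ≥0}
    (hd : 0 ≤ d) (hV : VolumeGrowthLE μ o d V) (hσ : 0 < σ) (hq : 1 < q)
    (hcrit : σ < d → q ≤ d / (d - σ)) {u : X → ℝ} (hu : AEStronglyMeasurable u μ)
    (hu₀ : 0 ≤ᵐ[μ] u) (huloc : ∀ R, 1 ≤ R → IntegrableOn (fun x ↦ u x ^ q) (ball o R) μ)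
    (hutail : Integrable (fun x ↦ |u x| * (1 + dist x o) ^ (-d - σ)) μ) {ψ : ℝ → X → ℝ}
    (hψ : ∀ R, 1 ≤ R → HasCutoffDecay μ o d σ C R (ψ R))
    (htest : ∀ R, 1 ≤ R → ∫ x in ball o R, u x ^ q ∂μ ≤ ∫ x, u x * ψ R x ∂μ) :
    u =ᵐ[μ] 0 := by
  have hN : 0 ≤ d + σ := by positivity
  have henergy (R : ℝ) (hR : 1 ≤ R) : ∫⁻ x in ball o R, ‖u x‖ₑ ^ q ∂μ ≤
      .ofReal (C * 3 ^ (d + σ)) * nonlocalTail μ o (d + σ) σ R (‖u ·‖ₑ) := by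
    calc ∫⁻ x in ball o R, ‖u x‖ₑ ^ q ∂μ = ENNReal.ofReal (∫ x in ball o R, u x ^ q ∂μ) := by
          have hu₀' := ae_restrict_of_ae (s := ball o R) hu₀
          rw [ofReal_integral_eq_lintegral_ofReal (huloc R hR)
            (hu₀'.mono fun x hx ↦ Real.rpow_nonneg hx q)]
          refine lintegral_congr_ae (hu₀'.mono fun x hx ↦ ?_)
          dsimp only
          rw [Real.enorm_eq_ofReal hx, ENNReal.ofReal_rpow_of_nonneg hx (zero_le_one.trans hq.le)]
      _ ≤ ENNReal.ofReal (∫ x, u x * ψ R x ∂μ) := ENNReal.ofReal_le_ofReal (htest R hR)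
      _ ≤ _ := (hψ R hR).ofReal_integral_mul_le hu hN (one_pos.trans_le hR)
  have htail : nonlocalTail μ o (d + σ) σ 1 (‖u ·‖ₑ) ≠ ∞ := by
    have hweight (x : X) : ‖|u x| * (1 + dist x o) ^ (-d - σ)‖ₑ =
        ‖u x‖ₑ * decayWeight (d + σ) o 1 x := by
      have hbase : 0 ≤ (1 + dist x o) ^ (-d - σ) := by positivity
      rw [enorm_mul, Real.enorm_abs, Real.enorm_of_nonneg hbase, decayWeight, div_one, neg_add']
    simpa only [nonlocalTail, ← hweight, Real.one_rpow, ENNReal.ofReal_one, one_mul] using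
      hutail.hasFiniteIntegral.ne
  have hzero := hV.ae_eq_zero_of_setLIntegral_rpow_le_nonlocalTail hu.enorm hN
    (lt_add_of_pos_right d hσ) hq hσ (mul_one_sub_inv_le_of_le_div_sub hσ.le hq.le hcrit)
    ENNReal.ofReal_ne_top htail henergy
  exact hzero.mono fun x hx ↦ enorm_eq_zero.1 hx

section Euclidean

lemma volumeGrowthLE_addHaar {E : Type*} [NormedAddCommGroup E] [NormedSpace ℝ E]
    [MeasurableSpace E] [BorelSpace E] [FiniteDimensional ℝ E] (μ : Measure E)
    [μ.IsAddHaarMeasure] (x : E) :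
    VolumeGrowthLE μ x (Module.finrank ℝ E) (μ (ball 0 1)).toNNReal := by
  intro R hR
  rw [ENNReal.coe_toNNReal measure_ball_lt_top.ne, Real.rpow_natCast,
    Measure.addHaar_ball_of_pos μ x (one_pos.trans_le hR)]

variable {n : ℕ} {η : Euc n → ℝ} {R : ℝ}

lemma IsCutoff.cutoffSq_eq_one (hη : IsCutoff n η) (hR : 0 < R) {x : Euc n} (hx : x ∈ ball 0 R) :
    cutoffSq n η R x = 1 := by
  have hnorm : ‖R⁻¹ • x‖ ≤ 1 := by
    rw [norm_smul, norm_inv, Real.norm_of_nonneg hR.le, inv_mul_le_one₀ hR]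
    exact (mem_ball_zero_iff.1 hx).le
  rw [cutoffSq, hη.2.2.1 _ hnorm, one_pow]

lemma IsCutoff.support_cutoffSq_subset (hη : IsCutoff n η) (hR : 0 < R) :
    Function.support (cutoffSq n η R) ⊆ ball 0 (2 * R) := by
  intro x hx
  contrapose! hx
  have hnorm : 2 ≤ ‖R⁻¹ • x‖ := by
    rw [norm_smul, norm_inv, Real.norm_of_nonneg hR.le, le_inv_mul_iff₀ hR, mul_comm]
    simpa using hx
  simp [cutoffSq, hη.2.2.2 _ hnorm]

lemma IsCutoff.integrable_mul_cutoffSq (hη : IsCutoff n η) (hR : 0 < R) {f : Euc n → ℝ}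
    (hf : IntegrableOn f (ball 0 (2 * R))) : Integrable fun x ↦ f x * cutoffSq n η R x := by
  have hcont : Continuous (cutoffSq n η R) :=
    (hη.1.continuous.comp (continuous_const_smul R⁻¹)).pow 2
  have hle (x : Euc n) : ‖cutoffSq n η R x‖ ≤ 1 := by
    rw [cutoffSq, Real.norm_of_nonneg (sq_nonneg _)]
    exact pow_le_one₀ (hη.2.1 _).1 (hη.2.1 _).2
  refine (integrableOn_iff_integrable_of_support_subset
    ((Function.support_mul_subset_right f _).trans (hη.support_cutoffSq_subset hR))).1 ?_
  exact hf.mul_bdd hcont.aestronglyMeasurable (ae_of_all _ hle)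

lemma IsCutoff.setIntegral_ball_le (hη : IsCutoff n η) (hR : 0 < R) {f : Euc n → ℝ}
    (hf₀ : ∀ x, 0 ≤ f x) (hf : IntegrableOn f (ball 0 (2 * R))) :
    ∫ x in ball 0 R, f x ≤ ∫ x, f x * cutoffSq n η R x := by
  calc ∫ x in ball 0 R, f x = ∫ x in ball 0 R, f x * cutoffSq n η R x :=
        setIntegral_congr_fun measurableSet_ball fun x hx ↦ by
          rw [hη.cutoffSq_eq_one hR hx, mul_one]
    _ ≤ ∫ x, f x * cutoffSq n η R x :=
        setIntegral_le_integral (hη.integrable_mul_cutoffSq hR hf)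
          (ae_of_all _ fun x ↦ mul_nonneg (hf₀ x) (sq_nonneg _))

end Euclidean

/-- Liouville under an abstract cutoff estimate; Proposition 1.2:
if for each `R > 0` there is a measurable `ψ_R` satisfying the cutoff bounds and the tested
supersolution inequality `∫ u ψ_R ≥ ∫ u^q η_R²`, then `u = 0` a.e. -/
theorem liouville_abstract_cutoff
    (n : ℕ) (hn : 1 ≤ n) (s : ℝ) (hs : s ∈ Set.Ioo (0 : ℝ) 1)
    (q : ℝ) (hq1 : 1 < q)
    (hq2 : 2 * s < (n : ℝ) → q ≤ (n : ℝ) / ((n : ℝ) - 2 * s))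
    (η : Euc n → ℝ) (hη : IsCutoff n η)
    (u : Euc n → ℝ) (humeas : Measurable u) (hupos : ∀ x, 0 ≤ u x)
    (huloc : MemLqLoc n q u) (hutail : MemL1Tail n s u)
    (C : ℝ) (hC : 0 < C) (ψ : ℝ → Euc n → ℝ)
    (hψmeas : ∀ R : ℝ, 0 < R → Measurable (ψ R))
    (hψbound : ∀ R : ℝ, 0 < R → ∀ x : Euc n,
      (‖x‖ < 2 * R → |ψ R x| ≤ C * R ^ (-(2 * s))) ∧
      (2 * R ≤ ‖x‖ → |ψ R x| ≤ C * R ^ (n : ℝ) * ‖x‖ ^ (-(n : ℝ) - 2 * s)))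
    (hψtest : ∀ R : ℝ, 0 < R →
      (∫ x : Euc n, u x ^ q * cutoffSq n η R x) ≤ ∫ x : Euc n, u x * ψ R x) :
    ∀ᵐ x : Euc n, u x = 0 := by
  have hgrowth := volumeGrowthLE_addHaar (volume : Measure (Euc n)) 0
  rw [finrank_euclideanSpace_fin] at hgrowth
  have hdecay (R : ℝ) (hR : 0 < R) : HasCutoffDecay volume 0 n (2 * s) C R (ψ R) :=
    { aestronglyMeasurable := (hψmeas R hR).aestronglyMeasurable
      near := fun x ↦ by simpa only [dist_zero_right] using (hψbound R hR x).1
      far := fun x ↦ by simpa only [dist_zero_right] using (hψbound R hR x).2 }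
  have htest (R : ℝ) (hR : 0 < R) : ∫ x in ball 0 R, u x ^ q ≤ ∫ x, u x * ψ R x :=
    (hη.setIntegral_ball_le hR (fun x ↦ Real.rpow_nonneg (hupos x) q)
      (huloc (2 * R) (by positivity))).trans (hψtest R hR)
  exact liouville_abstract_cutoff_general n.cast_nonneg hgrowth (mul_pos two_pos hs.1) hq1 hq2
    humeas.aestronglyMeasurable (ae_of_all _ hupos) (fun R hR ↦ huloc R (one_pos.trans_le hR))
    (by simpa only [dist_zero_right] using hutail.2)
    (fun R hR ↦ hdecay R (one_pos.trans_le hR)) (fun R hR ↦ htest R (one_pos.trans_le hR))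
end
end
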